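/- arXiv:1805.10922 — 2 statements merged into one kernel-verified Lean document; each statement's English description precedes it below -/
import Mathlib

section
/- Let g ∈ 𝒮(ℝ^d) be nonzero and u ∈ 𝒮'(ℝ^d). Then u ∈ 𝒮(ℝ^d) if and only if for every N ≥ 0 there is C_N > 0 with |𝒯_g u(x,ξ)| ≤ C_N ⟨(x,ξ)⟩^{−N} for all (x,ξ) ∈ ℝ^{2d}. -/
/-! For a Schwartz function `f`, the pairing `⟨f, T_x M_ξ γ⟩` decays rapidly in `x` because `f` and
`γ` do, and rapidly in `ξ` because Parseval's formula turns it into the same kind of pairing between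
the Fourier transforms of `f` and `γ`, with the roles of translation and modulation exchanged.

Conversely, Fourier inversion in `ξ` followed by integration in `x` gives
`∫∫ ⟨ψ, T_x M_{-ξ} g⟩ T_x M_ξ γ dx dξ = (∫ g γ) ψ` for all Schwartz `ψ`. The integral converges in
the Schwartz space, since time-frequency shifts grow only polynomially in every seminorm while their
coefficients decay rapidly. Hence `u` can be applied under the integral sign, so that
`(∫ g γ) u(ψ) = ∫∫ ⟨ψ, T_x M_{-ξ} g⟩ u(T_x M_ξ γ) dx dξ`. If `u(T_x M_ξ γ)` decays rapidly, then
`∫∫ u(T_x M_ξ γ) T_x M_{-ξ} g dx dξ` also converges in the Schwartz space, and it represents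
`(∫ g γ) u`. With `γ` the complex conjugate of `g`, the constant `∫ g γ` is `‖g‖²` in `L²`. -/

namespace FBI

open SchwartzMap Filter MeasureTheory
open scoped Topology NNReal FourierTransform RealInnerProductSpace ContDiff
open scoped BoundedContinuousFunction

/-! ### Translations in the Schwartz space -/

theorem one_add_norm_le_mul {E : Type*} [SeminormedAddCommGroup E] (x y : E) :
    1 + ‖y‖ ≤ (1 + ‖x‖) * (1 + ‖y - x‖) := by
  have := norm_add_le x (y - x)
  rw [add_sub_cancel] at this
  nlinarith [norm_nonneg x, norm_nonneg (y - x)]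

theorem norm_iteratedFDeriv_sub_le {E F : Type*} [NormedAddCommGroup E] [NormedSpace ℝ E]
    [NormedAddCommGroup F] [NormedSpace ℝ F] {f : E → F} {l : ℕ} (hf : ContDiff ℝ (l + 1) f)
    {M : ℝ} {x y : E} (hM : ∀ z ∈ Metric.closedBall y ‖x‖, ‖iteratedFDeriv ℝ (l + 1) f z‖ ≤ M) :
    ‖iteratedFDeriv ℝ l f (y - x) - iteratedFDeriv ℝ l f y‖ ≤ M * ‖x‖ := by
  have hd : Differentiable ℝ (iteratedFDeriv ℝ l f) :=
    hf.differentiable_iteratedFDeriv (by exact_mod_cast l.lt_succ_self)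
  simpa using (convex_closedBall y ‖x‖).norm_image_sub_le_of_norm_fderiv_le
    (fun z _ => hd z) (fun z hz => norm_fderiv_iteratedFDeriv.trans_le (hM z hz))
    (Metric.mem_closedBall_self (norm_nonneg x)) (y := y - x) (by simp)

section Schwartz

variable {E F : Type*} [NormedAddCommGroup E] [NormedSpace ℝ E]
  [NormedAddCommGroup F] [NormedSpace ℝ F]
  {𝕜 : Type*} [RCLike 𝕜] [NormedSpace 𝕜 F]

theorem iteratedFDeriv_compSubConstCLM (f : 𝓢(E, F)) (x y : E) (l : ℕ) :
    iteratedFDeriv ℝ l (compSubConstCLM 𝕜 x f) y = iteratedFDeriv ℝ l f (y - x) :=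
  iteratedFDeriv_comp_sub l x y

variable [SMulCommClass ℝ 𝕜 F]

variable (𝕜) in
/-- The increasing family of seminorms `f ↦ sup {‖y‖ ^ k * ‖D ^ l f y‖ | (k, l) ≤ m, y}` defining
the topology of the Schwartz space. Unlike a single `‖y‖ ^ k * ‖D ^ l f y‖`, they control the
inhomogeneous weights `(1 + ‖y‖) ^ k`, which are submultiplicative under translation. -/
noncomputable def supSeminorm (m : ℕ × ℕ) : Seminorm 𝕜 𝓢(E, F) :=
  (Finset.Iic m).sup (schwartzSeminormFamily 𝕜 E F)

theorem one_add_norm_pow_mul_norm_iteratedFDeriv_le {k l : ℕ} {m : ℕ × ℕ} (h : (k, l) ≤ m)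
    (f : 𝓢(E, F)) (y : E) :
    (1 + ‖y‖) ^ k * ‖iteratedFDeriv ℝ l f y‖ ≤ 2 ^ m.1 * supSeminorm 𝕜 m f :=
  one_add_le_sup_seminorm_apply h.1 h.2 f y

theorem continuous_supSeminorm (m : ℕ × ℕ) :
    Continuous (supSeminorm 𝕜 m : Seminorm 𝕜 𝓢(E, F)) :=
  Seminorm.continuous_finsetSup fun i _ => (schwartz_withSeminorms 𝕜 E F).continuous_seminorm i

theorem exists_le_mul_supSeminorm {q : Seminorm 𝕜 𝓢(E, F)} (hq : Continuous q) :
    ∃ (C : ℝ≥0) (m : ℕ × ℕ), ∀ f, q f ≤ C * supSeminorm 𝕜 m f := by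
  obtain ⟨s, C, -, hs⟩ := Seminorm.bound_of_continuous (schwartz_withSeminorms 𝕜 E F) q hq
  refine ⟨C, s.sup id, fun f => (hs f).trans ?_⟩
  have hsub : s ⊆ Finset.Iic (s.sup id) := fun i hi => Finset.mem_Iic.2 (Finset.le_sup (f := id) hi)
  exact mul_le_mul_of_nonneg_left ((Finset.sup_mono hsub : _ ≤ supSeminorm 𝕜 _) f) C.coe_nonneg

theorem supSeminorm_compSubConstCLM_le (m : ℕ × ℕ) (f : 𝓢(E, F)) (x : E) :
    supSeminorm 𝕜 m (compSubConstCLM 𝕜 x f) ≤ (1 + ‖x‖) ^ m.1 * (2 ^ m.1 * supSeminorm 𝕜 m f) := by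
  refine Seminorm.finset_sup_apply_le (by positivity) fun ⟨k, l⟩ hkl => ?_
  rw [Finset.mem_Iic] at hkl
  refine seminorm_le_bound 𝕜 k l _ (by positivity) fun y => ?_
  calc ‖y‖ ^ k * ‖iteratedFDeriv ℝ l (compSubConstCLM 𝕜 x f) y‖
      ≤ ((1 + ‖x‖) * (1 + ‖y - x‖)) ^ k * ‖iteratedFDeriv ℝ l f (y - x)‖ := by
        rw [iteratedFDeriv_compSubConstCLM]
        gcongr
        linarith [one_add_norm_le_mul x y]
    _ = (1 + ‖x‖) ^ k * ((1 + ‖y - x‖) ^ k * ‖iteratedFDeriv ℝ l f (y - x)‖) := by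
        rw [mul_pow, mul_assoc]
    _ ≤ (1 + ‖x‖) ^ m.1 * (2 ^ m.1 * supSeminorm 𝕜 m f) := by
        gcongr ?_ * ?_
        · exact pow_le_pow_right₀ (by simp) hkl.1
        · exact one_add_norm_pow_mul_norm_iteratedFDeriv_le hkl f (y - x)

theorem seminorm_compSubConstCLM_sub_le (k l : ℕ) (f : 𝓢(E, F)) (x : E) :
    SchwartzMap.seminorm 𝕜 k l (compSubConstCLM 𝕜 x f - f) ≤
      (1 + ‖x‖) ^ k * (2 ^ k * supSeminorm 𝕜 (k, l + 1) f) * ‖x‖ := by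
  set B : ℝ := 2 ^ k * supSeminorm 𝕜 (k, l + 1) f
  refine seminorm_le_bound 𝕜 k l _ (by positivity) fun y => ?_
  have hD : iteratedFDeriv ℝ l (compSubConstCLM 𝕜 x f - f) y =
      iteratedFDeriv ℝ l f (y - x) - iteratedFDeriv ℝ l f y := by
    rw [FunLike.coe_sub, iteratedFDeriv_sub_apply
      ((compSubConstCLM 𝕜 x f).smooth l).contDiffAt (f.smooth l).contDiffAt,
      iteratedFDeriv_compSubConstCLM]
  have hball : ∀ z ∈ Metric.closedBall y ‖x‖,
      ‖iteratedFDeriv ℝ (l + 1) f z‖ ≤ (1 + ‖x‖) ^ k * B / (1 + ‖y‖) ^ k := by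
    intro z hz
    rw [mem_closedBall_iff_norm'] at hz
    rw [le_div_iff₀' (by positivity)]
    calc (1 + ‖y‖) ^ k * ‖iteratedFDeriv ℝ (l + 1) f z‖
        ≤ ((1 + ‖x‖) * (1 + ‖z‖)) ^ k * ‖iteratedFDeriv ℝ (l + 1) f z‖ := by
          gcongr
          exact (one_add_norm_le_mul z y).trans (by rw [mul_comm]; gcongr)
      _ = (1 + ‖x‖) ^ k * ((1 + ‖z‖) ^ k * ‖iteratedFDeriv ℝ (l + 1) f z‖) := by
          rw [mul_pow, mul_assoc]
      _ ≤ (1 + ‖x‖) ^ k * B := by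
          gcongr ?_ * ?_
          exact one_add_norm_pow_mul_norm_iteratedFDeriv_le le_rfl f z
  calc ‖y‖ ^ k * ‖iteratedFDeriv ℝ l (compSubConstCLM 𝕜 x f - f) y‖
      ≤ (1 + ‖y‖) ^ k * ((1 + ‖x‖) ^ k * B / (1 + ‖y‖) ^ k * ‖x‖) := by
        rw [hD]
        gcongr
        · linarith
        · exact norm_iteratedFDeriv_sub_le (f.smooth (l + 1)) hball
    _ = (1 + ‖x‖) ^ k * B * ‖x‖ := by field_simp

theorem tendsto_compSubConstCLM_zero (f : 𝓢(E, F)) :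
    Tendsto (fun x => compSubConstCLM 𝕜 x f) (𝓝 0) (𝓝 f) := by
  rw [(schwartz_withSeminorms 𝕜 E F).tendsto_nhds]
  rintro ⟨k, l⟩ ε hε
  have hlim : Tendsto (fun x : E => (1 + ‖x‖) ^ k * (2 ^ k * supSeminorm 𝕜 (k, l + 1) f) * ‖x‖)
      (𝓝 0) (𝓝 0) :=
    Continuous.tendsto' (by fun_prop) _ _ (by simp)
  filter_upwards [hlim.eventually_lt_const hε] with x hx
  exact (seminorm_compSubConstCLM_sub_le k l f x).trans_lt hx

theorem exists_seminorm_compSubConstCLM_le {q : Seminorm 𝕜 𝓢(E, F)} (hq : Continuous q) :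
    ∃ (n : ℕ) (q' : Seminorm 𝕜 𝓢(E, F)), Continuous q' ∧
      ∀ x f, q (compSubConstCLM 𝕜 x f) ≤ (1 + ‖x‖) ^ n * q' f := by
  obtain ⟨C, m, hCm⟩ := exists_le_mul_supSeminorm hq
  refine ⟨m.1, (C * 2 ^ m.1) • supSeminorm 𝕜 m, (continuous_supSeminorm m).const_smul (C * 2 ^ m.1),
    fun x f => ?_⟩
  calc q (compSubConstCLM 𝕜 x f)
      ≤ C * supSeminorm 𝕜 m (compSubConstCLM 𝕜 x f) := hCm _
    _ ≤ C * ((1 + ‖x‖) ^ m.1 * (2 ^ m.1 * supSeminorm 𝕜 m f)) := by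
        gcongr
        exact supSeminorm_compSubConstCLM_le m f x
    _ = (1 + ‖x‖) ^ m.1 * ((C * 2 ^ m.1 : ℝ≥0) • supSeminorm 𝕜 m) f := by
        simp only [smul_apply, NNReal.smul_def, NNReal.coe_mul, NNReal.coe_pow,
          NNReal.coe_ofNat, smul_eq_mul]
        ring

variable (𝕜) in
theorem continuous_compSubConstCLM :
    Continuous fun p : E × 𝓢(E, F) => compSubConstCLM 𝕜 p.1 p.2 := by
  rw [continuous_iff_continuousAt]
  rintro ⟨x₀, f₀⟩
  have hpoint : Tendsto (fun p : E × 𝓢(E, F) => compSubConstCLM 𝕜 p.1 f₀) (𝓝 (x₀, f₀))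
      (𝓝 (compSubConstCLM 𝕜 x₀ f₀)) := by
    have hsub : Tendsto (fun p : E × 𝓢(E, F) => p.1 - x₀) (𝓝 (x₀, f₀)) (𝓝 0) :=
      Continuous.tendsto' (by fun_prop) _ _ (sub_self x₀)
    refine (((compSubConstCLM 𝕜 x₀).continuous.tendsto f₀).comp
      ((tendsto_compSubConstCLM_zero (𝕜 := 𝕜) f₀).comp hsub)).congr fun p => ?_
    simp only [Function.comp_apply, compSubConstCLM_comp, sub_add_cancel]
  have hunif : Tendsto (fun p : E × 𝓢(E, F) => compSubConstCLM 𝕜 p.1 (p.2 - f₀)) (𝓝 (x₀, f₀))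
      (𝓝 0) := by
    rw [(schwartz_withSeminorms 𝕜 E F).tendsto_nhds]
    intro i ε hε
    obtain ⟨n, q, hq, hle⟩ := exists_seminorm_compSubConstCLM_le
      ((schwartz_withSeminorms 𝕜 E F).continuous_seminorm i)
    have hlim : Tendsto (fun p : E × 𝓢(E, F) => (1 + ‖p.1‖) ^ n * q (p.2 - f₀)) (𝓝 (x₀, f₀))
        (𝓝 0) := Continuous.tendsto' (by fun_prop) _ _ (by simp)
    filter_upwards [hlim.eventually_lt_const hε] with p hp
    rw [sub_zero]
    exact (hle p.1 _).trans_lt hp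
  simpa [ContinuousAt] using hunif.add hpoint

end Schwartz

/-! ### Polynomial growth and rapid decay -/

section GrowthDecay

variable {𝕜 : Type*} [RCLike 𝕜]

section PolynomialGrowth

variable {Z S S' : Type*} [SeminormedAddCommGroup Z]
  [AddCommGroup S] [Module 𝕜 S] [TopologicalSpace S]
  [AddCommGroup S'] [Module 𝕜 S'] [TopologicalSpace S']

variable (𝕜) in
/-- A family `Φ` of elements of a topological vector space, indexed by a normed group, has
polynomial growth if every continuous seminorm of `Φ z` is bounded by a polynomial in `‖z‖`. -/
def PolynomialGrowth (Φ : Z → S) : Prop :=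
  ∀ q : Seminorm 𝕜 S, Continuous q → ∃ (C : ℝ) (n : ℕ), ∀ z, q (Φ z) ≤ C * (1 + ‖z‖) ^ n

theorem polynomialGrowth_const (s : S) : PolynomialGrowth 𝕜 fun _ : Z => s :=
  fun q _ => ⟨q s, 0, fun z => by rw [pow_zero, mul_one]⟩

theorem PolynomialGrowth.clm_apply {Φ : Z → S} (hΦ : PolynomialGrowth 𝕜 Φ) (A : S →L[𝕜] S') :
    PolynomialGrowth 𝕜 fun z => A (Φ z) :=
  fun q hq => hΦ (q.comp (A : S →ₗ[𝕜] S')) (hq.comp A.continuous)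

theorem PolynomialGrowth.compSubConstCLM {E F : Type*} [NormedAddCommGroup E] [NormedSpace ℝ E]
    [NormedAddCommGroup F] [NormedSpace ℝ F] [NormedSpace 𝕜 F] [SMulCommClass ℝ 𝕜 F]
    {Φ : Z → 𝓢(E, F)} (hΦ : PolynomialGrowth 𝕜 Φ) {x : Z → E} (hx : ∀ z, ‖x z‖ ≤ ‖z‖) :
    PolynomialGrowth 𝕜 fun z => SchwartzMap.compSubConstCLM 𝕜 (x z) (Φ z) := by
  intro q hq
  obtain ⟨n, q', hq', hle⟩ := exists_seminorm_compSubConstCLM_le hq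
  obtain ⟨C, k, hC⟩ := hΦ q' hq'
  refine ⟨C, n + k, fun z => (hle _ _).trans ?_⟩
  calc (1 + ‖x z‖) ^ n * q' (Φ z) ≤ (1 + ‖z‖) ^ n * (C * (1 + ‖z‖) ^ k) := by
        gcongr
        exacts [hx z, hC z]
    _ = C * (1 + ‖z‖) ^ (n + k) := by ring

end PolynomialGrowth

variable {W W' G : Type*} [NormedAddCommGroup W] [NormedAddCommGroup W'] [NormedAddCommGroup G]

/-- A function on a normed group is rapidly decaying if it is `O((1 + ‖z‖) ^ (-N))` for every `N`,
uniformly over the whole space. -/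
def RapidDecay (f : W → G) : Prop :=
  ∀ N : ℕ, ∃ C : ℝ, ∀ z, (1 + ‖z‖) ^ N * ‖f z‖ ≤ C

theorem RapidDecay.seminorm_smul {S : Type*} [AddCommGroup S] [Module 𝕜 S] [TopologicalSpace S]
    {c : W → 𝕜} (hc : RapidDecay c) {Φ : W → S} (hΦ : PolynomialGrowth 𝕜 Φ)
    {q : Seminorm 𝕜 S} (hq : Continuous q) : RapidDecay fun z => q (c z • Φ z) := by
  intro N
  obtain ⟨A, n, hA⟩ := hΦ q hq
  obtain ⟨C, hC⟩ := hc (N + n)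
  have hA₀ : 0 ≤ A := nonneg_of_mul_nonneg_left
    ((apply_nonneg q (Φ 0)).trans (hA 0)) (by positivity)
  refine ⟨C * A, fun z => ?_⟩
  rw [Real.norm_of_nonneg (apply_nonneg q _), map_smul_eq_mul]
  calc (1 + ‖z‖) ^ N * (‖c z‖ * q (Φ z))
      ≤ (1 + ‖z‖) ^ N * (‖c z‖ * (A * (1 + ‖z‖) ^ n)) := by gcongr; exact hA z
    _ = (1 + ‖z‖) ^ (N + n) * ‖c z‖ * A := by ring
    _ ≤ C * A := by gcongr; exact hC z

theorem RapidDecay.integrable [MeasurableSpace W] {μ : Measure W} [μ.HasTemperateGrowth]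
    {f : W → G} (hf : RapidDecay f) (hfm : AEStronglyMeasurable f μ) : Integrable f μ := by
  obtain ⟨C, hC⟩ := hf μ.integrablePower
  refine ((Measure.integrable_pow_neg_integrablePower μ).const_mul C).mono' hfm
    (.of_forall fun z => ?_)
  rw [Real.rpow_neg (by positivity), Real.rpow_natCast, ← div_eq_mul_inv,
    le_div_iff₀' (by positivity)]
  exact hC z

theorem RapidDecay.const_mul {f : W → 𝕜} (hf : RapidDecay f) (c : 𝕜) :
    RapidDecay fun z => c * f z := by
  intro N
  obtain ⟨C, hC⟩ := hf N
  refine ⟨‖c‖ * C, fun z => ?_⟩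
  rw [norm_mul, mul_left_comm]
  gcongr
  exact hC z

theorem rapidDecay_const_mul_iff {f : W → 𝕜} {c : 𝕜} (hc : c ≠ 0) :
    RapidDecay (fun z => c * f z) ↔ RapidDecay f :=
  ⟨fun h => by simpa [hc] using h.const_mul c⁻¹, fun h => h.const_mul c⟩

variable [NormedSpace ℝ W] [NormedSpace ℝ W']

theorem RapidDecay.comp_equiv {f : W → G} (hf : RapidDecay f) (e : W' ≃L[ℝ] W) :
    RapidDecay (f ∘ e) := by
  intro N
  obtain ⟨C, hC⟩ := hf N
  set K : ℝ := 1 + ‖(e.symm : W →L[ℝ] W')‖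
  have hK (z : W') : 1 + ‖z‖ ≤ K * (1 + ‖e z‖) := by
    have := (e.symm : W →L[ℝ] W').le_opNorm (e z)
    simp only [ContinuousLinearEquiv.coe_coe, ContinuousLinearEquiv.symm_apply_apply] at this
    nlinarith [norm_nonneg (e z), norm_nonneg (e.symm : W →L[ℝ] W')]
  refine ⟨K ^ N * C, fun z => ?_⟩
  calc (1 + ‖z‖) ^ N * ‖f (e z)‖ ≤ (K * (1 + ‖e z‖)) ^ N * ‖f (e z)‖ := by gcongr; exact hK z
    _ = K ^ N * ((1 + ‖e z‖) ^ N * ‖f (e z)‖) := by rw [mul_pow, mul_assoc]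
    _ ≤ K ^ N * C := by gcongr; exact hC (e z)

theorem rapidDecay_comp_equiv_iff {f : W → G} (e : W' ≃L[ℝ] W) :
    RapidDecay (f ∘ e) ↔ RapidDecay f :=
  ⟨fun h => by simpa [Function.comp_assoc] using h.comp_equiv e.symm, fun h => h.comp_equiv e⟩

end GrowthDecay

theorem sqrt_one_add_sq_add_sq_le_two_mul_one_add_max {a b : ℝ} (ha : 0 ≤ a) (hb : 0 ≤ b) :
    √(1 + a ^ 2 + b ^ 2) ≤ 2 * (1 + max a b) := by
  have ha' := le_max_left a b
  have hb' := le_max_right a b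
  rw [Real.sqrt_le_left (by positivity)]
  nlinarith

theorem one_add_max_le_two_mul_sqrt_one_add_sq_add_sq (a b : ℝ) :
    1 + max a b ≤ 2 * √(1 + a ^ 2 + b ^ 2) := by
  have h1 : 1 ≤ √(1 + a ^ 2 + b ^ 2) := Real.one_le_sqrt.2 (by nlinarith)
  have ha : a ≤ √(1 + a ^ 2 + b ^ 2) := Real.le_sqrt_of_sq_le (by nlinarith)
  have hb : b ≤ √(1 + a ^ 2 + b ^ 2) := Real.le_sqrt_of_sq_le (by nlinarith)
  linarith [max_le ha hb]

theorem rapidDecay_uncurry_iff {W₁ W₂ G : Type*} [NormedAddCommGroup W₁] [NormedAddCommGroup W₂]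
    [NormedAddCommGroup G] {f : W₁ → W₂ → G} :
    RapidDecay (Function.uncurry f) ↔ ∀ N : ℕ, ∃ C : ℝ, 0 < C ∧ ∀ x ξ,
      ‖f x ξ‖ ≤ C * √(1 + ‖x‖ ^ 2 + ‖ξ‖ ^ 2) ^ (-(N : ℝ)) := by
  have hpos (x : W₁) (ξ : W₂) : 0 < √(1 + ‖x‖ ^ 2 + ‖ξ‖ ^ 2) := by positivity
  refine forall_congr' fun N => ⟨fun ⟨C, hC⟩ => ?_, fun ⟨C, _, hC⟩ => ?_⟩
  · have hC₀ : 0 ≤ C := le_trans (by positivity) (hC 0)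
    refine ⟨2 ^ N * C + 1, by positivity, fun x ξ => ?_⟩
    rw [Real.rpow_neg (hpos x ξ).le, Real.rpow_natCast, ← div_eq_mul_inv,
      le_div_iff₀' (pow_pos (hpos x ξ) N)]
    calc √(1 + ‖x‖ ^ 2 + ‖ξ‖ ^ 2) ^ N * ‖f x ξ‖
        ≤ (2 * (1 + ‖(x, ξ)‖)) ^ N * ‖f x ξ‖ := by
          gcongr
          exact sqrt_one_add_sq_add_sq_le_two_mul_one_add_max (norm_nonneg x) (norm_nonneg ξ)
      _ = 2 ^ N * ((1 + ‖(x, ξ)‖) ^ N * ‖f x ξ‖) := by rw [mul_pow, mul_assoc]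
      _ ≤ 2 ^ N * C := by gcongr; exact hC (x, ξ)
      _ ≤ 2 ^ N * C + 1 := by linarith
  · refine ⟨2 ^ N * C, fun ⟨x, ξ⟩ => ?_⟩
    have hle := hC x ξ
    rw [Real.rpow_neg (hpos x ξ).le, Real.rpow_natCast, ← div_eq_mul_inv,
      le_div_iff₀' (pow_pos (hpos x ξ) N)] at hle
    calc (1 + ‖(x, ξ)‖) ^ N * ‖f x ξ‖
        ≤ (2 * √(1 + ‖x‖ ^ 2 + ‖ξ‖ ^ 2)) ^ N * ‖f x ξ‖ := by
          gcongr
          exact one_add_max_le_two_mul_sqrt_one_add_sq_add_sq ‖x‖ ‖ξ‖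
      _ = 2 ^ N * (√(1 + ‖x‖ ^ 2 + ‖ξ‖ ^ 2) ^ N * ‖f x ξ‖) := by rw [mul_pow, mul_assoc]
      _ ≤ 2 ^ N * C := by gcongr

theorem RapidDecay.one_add_norm_pow_mul {W G : Type*} [NormedAddCommGroup W]
    [NormedAddCommGroup G] {f : W → G} (hf : RapidDecay f) (n : ℕ) :
    RapidDecay fun z => (1 + ‖z‖) ^ n * ‖f z‖ := by
  intro N
  obtain ⟨C, hC⟩ := hf (N + n)
  refine ⟨C, fun z => le_of_eq_of_le ?_ (hC z)⟩
  rw [Real.norm_of_nonneg (by positivity), pow_add, mul_assoc]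

theorem RapidDecay.of_norm_le_fst_of_norm_le_snd {W W' G : Type*} [NormedAddCommGroup W]
    [NormedAddCommGroup W'] [NormedAddCommGroup G] {a : W → ℝ} {b : W' → ℝ} (ha : RapidDecay a)
    (hb : RapidDecay b) {f : W × W' → G} (hfa : ∀ p, ‖f p‖ ≤ a p.1) (hfb : ∀ p, ‖f p‖ ≤ b p.2) :
    RapidDecay f := by
  intro N
  obtain ⟨A, hA⟩ := ha N
  obtain ⟨B, hB⟩ := hb N
  refine ⟨max A B, fun p => ?_⟩
  rcases max_choice ‖p.1‖ ‖p.2‖ with hp | hp <;> rw [Prod.norm_def, hp]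
  · exact le_max_of_le_left ((hA p.1).trans'
      (by gcongr; exact (hfa p).trans (le_abs_self _)))
  · exact le_max_of_le_right ((hB p.2).trans'
      (by gcongr; exact (hfb p).trans (le_abs_self _)))

theorem rapidDecay_schwartzMap {E F : Type*} [NormedAddCommGroup E] [NormedSpace ℝ E]
    [NormedAddCommGroup F] [NormedSpace ℝ F] (f : 𝓢(E, F)) : RapidDecay f := by
  intro N
  refine ⟨2 ^ N * supSeminorm ℝ (N, 0) f, fun y => ?_⟩
  simpa using one_add_norm_pow_mul_norm_iteratedFDeriv_le (𝕜 := ℝ) (m := (N, 0)) le_rfl f y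

theorem rapidDecay_integral_norm_mul_norm_sub {E F G : Type*} [NormedAddCommGroup E]
    [NormedSpace ℝ E] [MeasurableSpace E] [OpensMeasurableSpace E] [SecondCountableTopology E]
    {μ : Measure E} [μ.HasTemperateGrowth] [NormedAddCommGroup F] [NormedSpace ℝ F]
    [NormedAddCommGroup G] [NormedSpace ℝ G] (f : 𝓢(E, F)) (h : 𝓢(E, G)) :
    RapidDecay fun x => ∫ y, ‖f y‖ * ‖h (y - x)‖ ∂μ := by
  intro N
  obtain ⟨C, hC⟩ := rapidDecay_schwartzMap h N
  have hint : Integrable (fun y => (1 + ‖y‖) ^ N * ‖f y‖) μ :=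
    ((rapidDecay_schwartzMap f).one_add_norm_pow_mul N).integrable
      (by fun_prop : Continuous fun y => (1 + ‖y‖) ^ N * ‖f y‖).aestronglyMeasurable
  refine ⟨∫ y, (1 + ‖y‖) ^ N * ‖f y‖ * C ∂μ, fun x => ?_⟩
  rw [Real.norm_of_nonneg (by positivity), ← integral_const_mul]
  refine integral_mono_of_nonneg (.of_forall fun y => by positivity) (hint.mul_const C)
    (.of_forall fun y => ?_)
  calc (1 + ‖x‖) ^ N * (‖f y‖ * ‖h (y - x)‖)
      ≤ ((1 + ‖y‖) * (1 + ‖y - x‖)) ^ N * (‖f y‖ * ‖h (y - x)‖) := by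
        gcongr
        rw [norm_sub_rev]
        exact one_add_norm_le_mul y x
    _ = (1 + ‖y‖) ^ N * ‖f y‖ * ((1 + ‖y - x‖) ^ N * ‖h (y - x)‖) := by
        rw [mul_pow, mul_mul_mul_comm]
    _ ≤ (1 + ‖y‖) ^ N * ‖f y‖ * C := by gcongr; exact hC (y - x)

/-! ### Time-frequency shifts -/

section Gabor

variable {V F : Type*} [NormedAddCommGroup V] [InnerProductSpace ℝ V] [FiniteDimensional ℝ V]
  [MeasurableSpace V] [BorelSpace V] [NormedAddCommGroup F] [NormedSpace ℂ F]

/-- The modulation `(M_ξ h)(y) = e^{2πi⟪y, ξ⟫} h(y)` of a Schwartz function, encoded as the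
conjugate of the translation by `ξ` under the Fourier transform, so that its continuity in `ξ` and
its seminorm bounds are those of translations. -/
noncomputable def modulation (ξ : V) (h : 𝓢(V, F)) : 𝓢(V, F) :=
  𝓕⁻ (compSubConstCLM ℂ ξ (𝓕 h))

/-- The time-frequency shift `T_x M_ξ h` of the window `h` by the phase space point `(x, ξ)`. -/
noncomputable def gaborAtom (h : 𝓢(V, F)) (p : V × V) : 𝓢(V, F) :=
  compSubConstCLM ℂ p.1 (modulation p.2 h)

theorem continuous_gaborAtom (h : 𝓢(V, F)) : Continuous (gaborAtom h) := by
  have hmod : Continuous fun ξ : V => modulation ξ h :=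
    (FourierTransform.fourierInvCLM ℂ 𝓢(V, F)).continuous.comp
      ((continuous_compSubConstCLM ℂ).comp (continuous_id.prodMk continuous_const))
  exact (continuous_compSubConstCLM ℂ).comp
    (continuous_fst.prodMk (hmod.comp continuous_snd))

theorem polynomialGrowth_gaborAtom (h : 𝓢(V, F)) : PolynomialGrowth ℂ (gaborAtom h) :=
  (((polynomialGrowth_const (𝓕 h)).compSubConstCLM norm_snd_le).clm_apply
    (FourierTransform.fourierInvCLM ℂ 𝓢(V, F))).compSubConstCLM norm_fst_le

theorem norm_fourier_compSubConstCLM (x : V) (h : 𝓢(V, F)) (w : V) :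
    ‖𝓕 (compSubConstCLM ℂ x h) w‖ = ‖𝓕 h w‖ := by
  have hcomp : ⇑(compSubConstCLM ℂ x h) = h ∘ fun y => y + -x :=
    funext fun y => congrArg h (sub_eq_add_neg y x)
  have htrans := congrFun
    (VectorFourier.fourierIntegral_comp_add_right 𝐞 volume (innerₗ V) h (-x)) w
  rw [← hcomp] at htrans
  exact (congrArg norm htrans).trans (Circle.norm_smul _ _)

variable [CompleteSpace F]

theorem fourier_modulation (ξ : V) (h : 𝓢(V, F)) :
    𝓕 (modulation ξ h) = compSubConstCLM ℂ ξ (𝓕 h) :=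
  FourierTransform.fourier_fourierInv_eq _

theorem modulation_apply (ξ : V) (h : 𝓢(V, F)) (y : V) :
    modulation ξ h y = 𝐞 ⟪y, ξ⟫ • h y := by
  calc modulation ξ h y
      = ∫ w, 𝐞 ⟪w, y⟫ • 𝓕 h (w - ξ) := by
        rw [modulation, fourierInv_coe, Real.fourierInv_eq]
        rfl
    _ = ∫ w, 𝐞 ⟪w + ξ, y⟫ • 𝓕 h w := by
        rw [← integral_add_right_eq_self _ ξ]
        simp only [add_sub_cancel_right]
    _ = 𝐞 ⟪y, ξ⟫ • ∫ w, 𝐞 ⟪w, y⟫ • 𝓕 h w := by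
        simp only [inner_add_left, AddChar.map_add_eq_mul, mul_comm (𝐞 ⟪_, y⟫), mul_smul,
          real_inner_comm y ξ, Circle.smul_def]
        rw [integral_smul]
    _ = 𝐞 ⟪y, ξ⟫ • h y := by
        rw [← Real.fourierInv_eq, ← fourierInv_coe, FourierTransform.fourierInv_fourier_eq]

theorem gaborAtom_apply (h : 𝓢(V, F)) (p : V × V) (y : V) :
    gaborAtom h p y = 𝐞 ⟪y - p.1, p.2⟫ • h (y - p.1) :=
  modulation_apply p.2 h (y - p.1)

end Gabor

section STFT

variable {V : Type*} [NormedAddCommGroup V] [InnerProductSpace ℝ V] [FiniteDimensional ℝ V]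
  [MeasurableSpace V] [BorelSpace V]

/-- The tempered distribution `ψ ↦ ∫ f ψ` defined by a Schwartz function `f`. -/
noncomputable def dualPairing (f : 𝓢(V, ℂ)) : 𝓢(V, ℂ) →L[ℂ] ℂ :=
  integralCLM ℂ volume ∘L SchwartzMap.pairing (.mul ℂ ℂ) f

theorem dualPairing_apply (f ψ : 𝓢(V, ℂ)) : dualPairing f ψ = ∫ y, f y * ψ y := rfl

theorem dualPairing_eq_dualPairing_fourier (f ψ : 𝓢(V, ℂ)) :
    dualPairing f ψ = dualPairing (𝓕⁻ f) (𝓕 ψ) := by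
  have := SchwartzMap.integral_fourier_mul_eq (𝓕⁻ f) ψ
  rwa [FourierTransform.fourier_fourierInv_eq] at this

theorem norm_dualPairing_le (f ψ : 𝓢(V, ℂ)) : ‖dualPairing f ψ‖ ≤ ∫ y, ‖f y‖ * ‖ψ y‖ := by
  simpa only [dualPairing_apply, norm_mul] using norm_integral_le_integral_norm fun y => f y * ψ y

theorem rapidDecay_dualPairing_gaborAtom (f h : 𝓢(V, ℂ)) :
    RapidDecay fun p => dualPairing f (gaborAtom h p) := by
  refine .of_norm_le_fst_of_norm_le_snd
    (rapidDecay_integral_norm_mul_norm_sub (μ := volume) f h)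
    (rapidDecay_integral_norm_mul_norm_sub (μ := volume) (𝓕⁻ f) (𝓕 h)) (fun p => ?_) fun p => ?_
  · simpa only [gaborAtom_apply, Circle.norm_smul] using norm_dualPairing_le f (gaborAtom h p)
  · rw [dualPairing_eq_dualPairing_fourier]
    refine (norm_dualPairing_le _ _).trans_eq (integral_congr_ae (.of_forall fun w => ?_))
    simp only [gaborAtom, norm_fourier_compSubConstCLM, fourier_modulation, compSubConstCLM_apply]

end STFT

/-! ### Schwartz-valued integrals -/

theorem exists_clm_apply_eq_of_norm_le {𝕜 S B : Type*} [RCLike 𝕜] [AddCommGroup S] [Module 𝕜 S]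
    [SeminormedAddCommGroup B] [NormedSpace 𝕜 B] (J : S →ₗ[𝕜] B) (u : S →ₗ[𝕜] 𝕜) {C : ℝ}
    (hu : ∀ ψ, ‖u ψ‖ ≤ C * ‖J ψ‖) : ∃ w : B →L[𝕜] 𝕜, ∀ ψ, w (J ψ) = u ψ := by
  obtain ⟨σ, hσ⟩ := J.rangeRestrict.exists_rightInverse_of_surjective J.range_rangeRestrict
  have hJσ (b : J.range) : J (σ b) = b := congrArg Subtype.val (LinearMap.congr_fun hσ b)
  obtain ⟨w, hw, -⟩ := exists_extension_norm_eq J.range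
    ((u ∘ₗ σ).mkContinuous C fun b => by simpa [hJσ] using hu (σ b))
  refine ⟨w, fun ψ => ?_⟩
  have hker : u (σ (J.rangeRestrict ψ) - ψ) = 0 := by
    simpa [hJσ] using hu (σ (J.rangeRestrict ψ) - ψ)
  rw [map_sub, sub_eq_zero] at hker
  exact (hw (J.rangeRestrict ψ)).trans hker

set_option maxSynthPendingDepth 3 in
theorem hasFTaylorSeriesUpTo_integral {Z E F : Type*} [MeasurableSpace Z] {μ : Measure Z}
    [NormedAddCommGroup E] [NormedSpace ℝ E] [NormedAddCommGroup F] [NormedSpace ℝ F]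
    {f : Z → E → F} (hf : ∀ z, ContDiff ℝ ∞ (f z))
    (hmeas : ∀ l y, AEStronglyMeasurable (fun z => iteratedFDeriv ℝ l (f z) y) μ)
    {b : ℕ → Z → ℝ} (hb : ∀ l, Integrable (b l) μ)
    (hle : ∀ l z y, ‖iteratedFDeriv ℝ l (f z) y‖ ≤ b l z) :
    HasFTaylorSeriesUpTo ∞ (fun y => ∫ z, f z y ∂μ)
      fun y l => ∫ z, iteratedFDeriv ℝ l (f z) y ∂μ := by
  have hint (l : ℕ) (y : E) : Integrable (fun z => iteratedFDeriv ℝ l (f z) y) μ :=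
    (hb l).mono' (hmeas l y) (.of_forall fun z => hle l z y)
  refine (hasFTaylorSeriesUpTo_top_iff' le_rfl).2 ⟨fun y => ?_, fun l y => ?_⟩
  · exact ((continuousMultilinearCurryFin0 ℝ E F).toContinuousLinearEquiv.integral_comp_comm _).symm
  have hcurry (z : Z) (y : E) : HasFDerivAt (iteratedFDeriv ℝ l (f z))
      (iteratedFDeriv ℝ (l + 1) (f z) y).curryLeft y :=
    (hasFTaylorSeriesUpTo_top_iff' le_rfl).1 (contDiff_iff_ftaylorSeries.1 (hf z)) |>.2 l y
  have hderiv := hasFDerivAt_integral_of_dominated_of_fderiv_le (μ := μ) (𝕜 := ℝ)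
    (F := fun y z => iteratedFDeriv ℝ l (f z) y) (x₀ := y) univ_mem
    (.of_forall (hmeas l)) (hint l y)
    ((continuousMultilinearCurryLeftEquiv ℝ (fun _ : Fin (l + 1) => E) F).continuous
      |>.comp_aestronglyMeasurable (hmeas (l + 1) y))
    (.of_forall fun z y _ => (LinearIsometryEquiv.norm_map _ _).trans_le (hle (l + 1) z y))
    (hb (l + 1)) (.of_forall fun z y _ => hcurry z y)
  exact hderiv.congr_fderiv <| (continuousMultilinearCurryLeftEquiv ℝ (fun _ : Fin (l + 1) => E) F)
    |>.toContinuousLinearEquiv.integral_comp_comm fun z => iteratedFDeriv ℝ (l + 1) (f z) y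

section Jets

set_option maxSynthPendingDepth 3

variable {E F 𝕜 : Type*} [NormedAddCommGroup E] [NormedSpace ℝ E] [NormedAddCommGroup F]
  [NormedSpace ℝ F] [RCLike 𝕜] [NormedSpace 𝕜 F] [SMulCommClass ℝ 𝕜 F]

variable (𝕜) in
/-- The derivative of order `l` of a Schwartz function, weighted by `(1 + ‖y‖) ^ k`, as a bounded
continuous function. -/
noncomputable def weightedIteratedFDeriv (k l : ℕ) : 𝓢(E, F) →L[𝕜] E →ᵇ E [×l]→L[ℝ] F :=
  mkCLMtoNormedSpace
    (fun f : 𝓢(E, F) => BoundedContinuousFunction.ofNormedAddCommGroup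
      (fun y => (1 + ‖y‖) ^ k • iteratedFDeriv ℝ l f y)
      (by
        have := (f.smooth l).continuous_iteratedFDeriv (m := l) le_rfl
        fun_prop)
      (2 ^ k * supSeminorm 𝕜 (k, l) f) fun y => by
        rw [norm_smul, Real.norm_of_nonneg (by positivity)]
        exact one_add_norm_pow_mul_norm_iteratedFDeriv_le le_rfl f y)
    (fun f f' => by
      ext y v
      simp [iteratedFDeriv_add_apply (f.smooth l).contDiffAt (f'.smooth l).contDiffAt])
    (fun c f => by
      ext y v
      simp [iteratedFDeriv_const_smul_apply (f.smooth l).contDiffAt, smul_comm c])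
    ⟨Finset.Iic (k, l), 2 ^ k, by positivity, fun f =>
      BoundedContinuousFunction.norm_ofNormedAddCommGroup_le _ (by positivity) _⟩

theorem weightedIteratedFDeriv_apply (k l : ℕ) (f : 𝓢(E, F)) (y : E) :
    weightedIteratedFDeriv 𝕜 k l f y = (1 + ‖y‖) ^ k • iteratedFDeriv ℝ l f y :=
  rfl

variable (𝕜) in
/-- The jet of order `n` of a Schwartz function, weighted by `(1 + ‖y‖) ^ n`. These maps into normed
spaces define the topology of the Schwartz space. -/
noncomputable def weightedJet (n : ℕ) :
    𝓢(E, F) →L[𝕜] (j : Fin (n + 1)) → E →ᵇ E [×j]→L[ℝ] F :=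
  ContinuousLinearMap.pi fun j => weightedIteratedFDeriv 𝕜 n j

theorem weightedJet_apply (n : ℕ) (f : 𝓢(E, F)) (j : Fin (n + 1)) :
    weightedJet 𝕜 n f j = weightedIteratedFDeriv 𝕜 n j f :=
  rfl

theorem supSeminorm_le_norm_weightedJet (n : ℕ) (f : 𝓢(E, F)) :
    supSeminorm 𝕜 (n, n) f ≤ ‖weightedJet 𝕜 n f‖ := by
  refine Seminorm.finset_sup_apply_le (norm_nonneg _) fun ⟨k, l⟩ hkl => ?_
  obtain ⟨hk, hl⟩ := Prod.mk_le_mk.1 (Finset.mem_Iic.1 hkl)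
  refine seminorm_le_bound 𝕜 k l f (norm_nonneg _) fun y => ?_
  calc ‖y‖ ^ k * ‖iteratedFDeriv ℝ l f y‖
      ≤ (1 + ‖y‖) ^ n * ‖iteratedFDeriv ℝ l f y‖ := by
        gcongr
        exact (pow_le_pow_left₀ (norm_nonneg y) (by simp) k).trans
          (pow_le_pow_right₀ (by simp) hk)
    _ = ‖weightedJet 𝕜 n f ⟨l, Nat.lt_succ_of_le hl⟩ y‖ := by
        rw [weightedJet_apply, weightedIteratedFDeriv_apply, norm_smul,
          Real.norm_of_nonneg (by positivity)]
    _ ≤ ‖weightedJet 𝕜 n f ⟨l, Nat.lt_succ_of_le hl⟩‖ :=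
        (weightedJet 𝕜 n f ⟨l, Nat.lt_succ_of_le hl⟩).norm_coe_le_norm y
    _ ≤ ‖weightedJet 𝕜 n f‖ := norm_le_pi_norm _ _

theorem exists_le_mul_norm_weightedJet {q : Seminorm 𝕜 𝓢(E, F)} (hq : Continuous q) :
    ∃ (C : ℝ≥0) (n : ℕ), ∀ f, q f ≤ C * ‖weightedJet 𝕜 n f‖ := by
  obtain ⟨C, m, hCm⟩ := exists_le_mul_supSeminorm hq
  refine ⟨C, max m.1 m.2, fun f => (hCm f).trans ?_⟩
  have hm : m ≤ (max m.1 m.2, max m.1 m.2) := ⟨le_max_left _ _, le_max_right _ _⟩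
  have hmono : supSeminorm 𝕜 m ≤ (supSeminorm 𝕜 (max m.1 m.2, max m.1 m.2) : Seminorm 𝕜 𝓢(E, F)) :=
    Finset.sup_mono (Finset.Iic_subset_Iic.2 hm)
  gcongr
  exact (hmono f).trans (supSeminorm_le_norm_weightedJet _ f)

end Jets

theorem integrable_clm_comp {Z 𝕜 S B : Type*} [RCLike 𝕜] [AddCommGroup S] [Module 𝕜 S]
    [TopologicalSpace S] [NormedAddCommGroup B] [NormedSpace 𝕜 B]
    [TopologicalSpace Z] [SecondCountableTopology Z] [MeasurableSpace Z] [OpensMeasurableSpace Z]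
    {μ : Measure Z} {Φ : Z → S} (hcont : Continuous Φ)
    (hint : ∀ q : Seminorm 𝕜 S, Continuous q → Integrable (fun z => q (Φ z)) μ) (A : S →L[𝕜] B) :
    Integrable (fun z => A (Φ z)) μ :=
  (hint ((normSeminorm 𝕜 B).comp A.toLinearMap) (continuous_norm.comp A.continuous)).mono'
    (A.continuous.comp hcont).aestronglyMeasurable (.of_forall fun _ => le_rfl)

section Pettis

set_option maxSynthPendingDepth 3

variable {Z E F 𝕜 : Type*} [NormedAddCommGroup E] [NormedSpace ℝ E] [NormedAddCommGroup F]
  [NormedSpace ℝ F] [RCLike 𝕜] [NormedSpace 𝕜 F] [SMulCommClass ℝ 𝕜 F] [CompleteSpace F]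
  [TopologicalSpace Z] [SecondCountableTopology Z] [MeasurableSpace Z] [OpensMeasurableSpace Z]
  {μ : Measure Z} {Φ : Z → 𝓢(E, F)}

theorem integral_weightedIteratedFDeriv_apply (hcont : Continuous Φ)
    (hint : ∀ q : Seminorm 𝕜 𝓢(E, F), Continuous q → Integrable (fun z => q (Φ z)) μ)
    (k l : ℕ) (y : E) :
    (∫ z, weightedIteratedFDeriv 𝕜 k l (Φ z) ∂μ) y =
      (1 + ‖y‖) ^ k • ∫ z, iteratedFDeriv ℝ l (Φ z) y ∂μ :=
  calc (∫ z, weightedIteratedFDeriv 𝕜 k l (Φ z) ∂μ) y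
      = ∫ z, weightedIteratedFDeriv 𝕜 k l (Φ z) y ∂μ :=
        ((BoundedContinuousFunction.evalCLM ℝ y).integral_comp_comm
          (integrable_clm_comp hcont hint (weightedIteratedFDeriv 𝕜 k l))).symm
    _ = (1 + ‖y‖) ^ k • ∫ z, iteratedFDeriv ℝ l (Φ z) y ∂μ := by
        simp_rw [weightedIteratedFDeriv_apply, integral_smul]

theorem exists_iteratedFDeriv_eq_integral (hcont : Continuous Φ)
    (hint : ∀ q : Seminorm 𝕜 𝓢(E, F), Continuous q → Integrable (fun z => q (Φ z)) μ) :
    ∃ Ψ : 𝓢(E, F), (∀ y, Ψ y = ∫ z, Φ z y ∂μ) ∧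
      ∀ l y, iteratedFDeriv ℝ l Ψ y = ∫ z, iteratedFDeriv ℝ l (Φ z) y ∂μ := by
  have hseries := hasFTaylorSeriesUpTo_integral (μ := μ) (fun z => (Φ z).smooth ⊤)
    (b := fun l z => ‖weightedIteratedFDeriv 𝕜 0 l (Φ z)‖)
    (fun l y => by
      have := (BoundedContinuousFunction.evalCLM ℝ y).continuous.comp
        ((weightedIteratedFDeriv 𝕜 0 l).continuous.comp hcont)
      simpa [Function.comp_def, weightedIteratedFDeriv_apply] using this.aestronglyMeasurable)
    (fun l => (integrable_clm_comp hcont hint (weightedIteratedFDeriv 𝕜 0 l)).norm)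
    (fun l z y => by
      simpa [weightedIteratedFDeriv_apply] using
        (weightedIteratedFDeriv 𝕜 0 l (Φ z)).norm_coe_le_norm y)
  have hdecay (k l : ℕ) (y : E) : ‖y‖ ^ k * ‖∫ z, iteratedFDeriv ℝ l (Φ z) y ∂μ‖ ≤
      ‖∫ z, weightedIteratedFDeriv 𝕜 k l (Φ z) ∂μ‖ :=
    calc ‖y‖ ^ k * ‖∫ z, iteratedFDeriv ℝ l (Φ z) y ∂μ‖
        ≤ (1 + ‖y‖) ^ k * ‖∫ z, iteratedFDeriv ℝ l (Φ z) y ∂μ‖ := by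
          gcongr
          simp
      _ = ‖(∫ z, weightedIteratedFDeriv 𝕜 k l (Φ z) ∂μ) y‖ := by
          rw [integral_weightedIteratedFDeriv_apply hcont hint, norm_smul,
            Real.norm_of_nonneg (by positivity)]
      _ ≤ ‖∫ z, weightedIteratedFDeriv 𝕜 k l (Φ z) ∂μ‖ :=
          BoundedContinuousFunction.norm_coe_le_norm _ y
  have hderiv (l : ℕ) (y : E) := (hseries.eq_iteratedFDeriv (m := l) (mod_cast le_top) y).symm
  exact ⟨⟨_, hseries.contDiff, fun k l => ⟨_, fun y => hderiv l y ▸ hdecay k l y⟩⟩,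
    fun _ => rfl, hderiv⟩

theorem exists_pettis_integral (hcont : Continuous Φ)
    (hint : ∀ q : Seminorm 𝕜 𝓢(E, F), Continuous q → Integrable (fun z => q (Φ z)) μ) :
    ∃ Ψ : 𝓢(E, F), (∀ y, Ψ y = ∫ z, Φ z y ∂μ) ∧
      ∀ u : 𝓢(E, F) →L[𝕜] 𝕜, u Ψ = ∫ z, u (Φ z) ∂μ := by
  obtain ⟨Ψ, hΨ, hDΨ⟩ := exists_iteratedFDeriv_eq_integral hcont hint
  have hjet (n : ℕ) : weightedJet 𝕜 n Ψ = ∫ z, weightedJet 𝕜 n (Φ z) ∂μ := by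
    ext j y : 2
    calc weightedJet 𝕜 n Ψ j y = (∫ z, weightedJet 𝕜 n (Φ z) j ∂μ) y := by
          simp_rw [weightedJet_apply, integral_weightedIteratedFDeriv_apply hcont hint,
            weightedIteratedFDeriv_apply, hDΨ]
      _ = (∫ z, weightedJet 𝕜 n (Φ z) ∂μ) j y :=
          DFunLike.congr_fun (eval_integral (fun j : Fin (n + 1) =>
            integrable_clm_comp hcont hint (weightedIteratedFDeriv 𝕜 n j)) j).symm y
  refine ⟨Ψ, hΨ, fun u => ?_⟩
  obtain ⟨C, n, hC⟩ := exists_le_mul_norm_weightedJet (q := (normSeminorm 𝕜 𝕜).comp u.toLinearMap)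
    (continuous_norm.comp u.continuous)
  obtain ⟨w, hw⟩ := exists_clm_apply_eq_of_norm_le (weightedJet 𝕜 n).toLinearMap u.toLinearMap hC
  calc u Ψ = w (weightedJet 𝕜 n Ψ) := (hw Ψ).symm
    _ = ∫ z, w (weightedJet 𝕜 n (Φ z)) ∂μ := by
      rw [hjet, w.integral_comp_comm (integrable_clm_comp hcont hint (weightedJet 𝕜 n))]
    _ = ∫ z, u (Φ z) ∂μ := integral_congr_ae (.of_forall fun z => hw (Φ z))

end Pettis

section Superposition

variable {Z E F 𝕜 : Type*} [NormedAddCommGroup Z] [MeasurableSpace Z] [OpensMeasurableSpace Z]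
  {μ : Measure Z} [μ.HasTemperateGrowth] [NormedAddCommGroup E]
  [NormedSpace ℝ E] [NormedAddCommGroup F] [NormedSpace ℝ F] [RCLike 𝕜] [NormedSpace 𝕜 F]
  [SMulCommClass ℝ 𝕜 F] {c : Z → 𝕜} {Φ : Z → 𝓢(E, F)}

theorem integrable_seminorm_smul (hc : Continuous c) (hdecay : RapidDecay c) (hΦ : Continuous Φ)
    (hgrowth : PolynomialGrowth 𝕜 Φ) (q : Seminorm 𝕜 𝓢(E, F)) (hq : Continuous q) :
    Integrable (fun z => q (c z • Φ z)) μ :=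
  (hdecay.seminorm_smul hgrowth hq).integrable (hq.comp (hc.smul hΦ)).aestronglyMeasurable

theorem exists_pettis_integral_smul [SecondCountableTopology Z] [CompleteSpace F]
    (hc : Continuous c) (hdecay : RapidDecay c) (hΦ : Continuous Φ)
    (hgrowth : PolynomialGrowth 𝕜 Φ) :
    ∃ Ψ : 𝓢(E, F), (∀ y, Ψ y = ∫ z, c z • Φ z y ∂μ) ∧
      ∀ u : 𝓢(E, F) →L[𝕜] 𝕜, u Ψ = ∫ z, c z * u (Φ z) ∂μ := by
  obtain ⟨Ψ, hΨ, hu⟩ := exists_pettis_integral (μ := μ) (hc.smul hΦ)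
    (integrable_seminorm_smul hc hdecay hΦ hgrowth)
  refine ⟨Ψ, hΨ, fun u => (hu u).trans ?_⟩
  simp only [Pi.smul_apply', map_smul, smul_eq_mul]

end Superposition

/-! ### The inversion formula -/

section Inversion

variable {V : Type*} [NormedAddCommGroup V] [InnerProductSpace ℝ V]

variable (V) in
/-- The involution `(x, ξ) ↦ (x, -ξ)` of phase space: the complex conjugate of the time-frequency
shift of a window by `p` is the shift of the conjugate window by the reflected point. -/
noncomputable def phaseReflection : (V × V) ≃L[ℝ] V × V :=
  (ContinuousLinearEquiv.refl ℝ V).prodCongr (.neg ℝ)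

theorem phaseReflection_apply (p : V × V) : phaseReflection V p = (p.1, -p.2) :=
  rfl

theorem norm_phaseReflection (p : V × V) : ‖phaseReflection V p‖ = ‖p‖ := by
  simp only [phaseReflection_apply, Prod.norm_def, norm_neg]

variable [FiniteDimensional ℝ V] [MeasurableSpace V] [BorelSpace V]

instance : (volume : Measure (V × V)).HasTemperateGrowth :=
  inferInstanceAs ((volume : Measure V).prod volume).HasTemperateGrowth

theorem polynomialGrowth_gaborAtom_phaseReflection (g : 𝓢(V, ℂ)) :
    PolynomialGrowth ℂ fun p => gaborAtom g (phaseReflection V p) := by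
  intro q hq
  obtain ⟨C, n, hC⟩ := polynomialGrowth_gaborAtom g q hq
  exact ⟨C, n, fun p => norm_phaseReflection p ▸ hC (phaseReflection V p)⟩

theorem dualPairing_gaborAtom_phaseReflection (ψ g : 𝓢(V, ℂ)) (x ξ : V) :
    dualPairing ψ (gaborAtom g (phaseReflection V (x, ξ))) =
      𝐞 ⟪x, ξ⟫ • 𝓕 (pairing (.mul ℂ ℂ) ψ (compSubConstCLM ℂ x g)) ξ := by
  rw [dualPairing_apply, fourier_coe, Real.fourier_eq, Circle.smul_def, ← integral_smul]
  refine integral_congr_ae (.of_forall fun y => ?_)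
  simp only [gaborAtom_apply, phaseReflection_apply]
  rw [inner_neg_right, inner_sub_left, neg_sub, sub_eq_add_neg, AddChar.map_add_eq_mul, mul_smul]
  simp only [Circle.smul_def, smul_eq_mul, pairing_apply_apply, compSubConstCLM_apply,
    ContinuousLinearMap.mul_apply']
  ring

theorem integral_dualPairing_mul_gaborAtom_snd (ψ g γ : 𝓢(V, ℂ)) (x y : V) :
    ∫ ξ, dualPairing ψ (gaborAtom g (phaseReflection V (x, ξ))) * gaborAtom γ (x, ξ) y =
      ψ y * (g (y - x) * γ (y - x)) := by
  set k := pairing (.mul ℂ ℂ) ψ (compSubConstCLM ℂ x g) with hk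
  calc ∫ ξ, dualPairing ψ (gaborAtom g (phaseReflection V (x, ξ))) * gaborAtom γ (x, ξ) y
      = ∫ ξ, 𝐞 ⟪ξ, y⟫ • 𝓕 k ξ * γ (y - x) := by
        refine integral_congr_ae (.of_forall fun ξ => ?_)
        have hphase : 𝐞 ⟪ξ, y⟫ = 𝐞 ⟪x, ξ⟫ * 𝐞 ⟪y - x, ξ⟫ := by
          rw [← AddChar.map_add_eq_mul, ← inner_add_left, add_sub_cancel, real_inner_comm]
        simp only [dualPairing_gaborAtom_phaseReflection, gaborAtom_apply, hphase, Circle.smul_def,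
          Circle.coe_mul, smul_eq_mul, ← hk]
        ring
    _ = k y * γ (y - x) := by
        rw [integral_mul_const, ← Real.fourierInv_eq, ← fourierInv_coe,
          FourierTransform.fourierInv_fourier_eq]
    _ = ψ y * (g (y - x) * γ (y - x)) := mul_assoc _ _ _

theorem continuous_gaborAtom_phaseReflection (g : 𝓢(V, ℂ)) :
    Continuous fun p => gaborAtom g (phaseReflection V p) :=
  (continuous_gaborAtom g).comp (phaseReflection V).continuous

theorem continuous_dualPairing_gaborAtom_phaseReflection (ψ g : 𝓢(V, ℂ)) :
    Continuous fun p => dualPairing ψ (gaborAtom g (phaseReflection V p)) :=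
  (dualPairing ψ).continuous.comp (continuous_gaborAtom_phaseReflection g)

theorem rapidDecay_dualPairing_gaborAtom_phaseReflection (ψ g : 𝓢(V, ℂ)) :
    RapidDecay fun p => dualPairing ψ (gaborAtom g (phaseReflection V p)) :=
  (rapidDecay_dualPairing_gaborAtom ψ g).comp_equiv (phaseReflection V)

theorem integral_dualPairing_mul_gaborAtom (ψ g γ : 𝓢(V, ℂ)) (y : V) :
    ∫ p, dualPairing ψ (gaborAtom g (phaseReflection V p)) * gaborAtom γ p y =
      (∫ z, g z * γ z) * ψ y := by
  have hint : Integrable fun p =>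
      dualPairing ψ (gaborAtom g (phaseReflection V p)) * gaborAtom γ p y :=
    integrable_clm_comp ((continuous_dualPairing_gaborAtom_phaseReflection ψ g).smul
        (continuous_gaborAtom γ))
      (integrable_seminorm_smul (continuous_dualPairing_gaborAtom_phaseReflection ψ g)
        (rapidDecay_dualPairing_gaborAtom_phaseReflection ψ g) (continuous_gaborAtom γ)
        (polynomialGrowth_gaborAtom γ))
      (BoundedContinuousFunction.evalCLM ℂ y ∘L toBoundedContinuousFunctionCLM ℂ V ℂ)
  calc ∫ p, dualPairing ψ (gaborAtom g (phaseReflection V p)) * gaborAtom γ p y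
      = ∫ x, ∫ ξ, dualPairing ψ (gaborAtom g (phaseReflection V (x, ξ))) * gaborAtom γ (x, ξ) y :=
        integral_prod _ hint
    _ = ∫ x, ψ y * (g (y - x) * γ (y - x)) := by
        simp_rw [integral_dualPairing_mul_gaborAtom_snd]
    _ = (∫ z, g z * γ z) * ψ y := by
        rw [integral_const_mul, integral_sub_left_eq_self (fun z => g z * γ z), mul_comm]

theorem integral_dualPairing_mul_clm_gaborAtom (u : 𝓢(V, ℂ) →L[ℂ] ℂ) (ψ g γ : 𝓢(V, ℂ)) :
    ∫ p, dualPairing ψ (gaborAtom g (phaseReflection V p)) * u (gaborAtom γ p) =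
      (∫ z, g z * γ z) * u ψ := by
  obtain ⟨Ψ, hΨ, hu⟩ := exists_pettis_integral_smul (μ := volume)
    (continuous_dualPairing_gaborAtom_phaseReflection ψ g)
    (rapidDecay_dualPairing_gaborAtom_phaseReflection ψ g) (continuous_gaborAtom γ)
    (polynomialGrowth_gaborAtom γ)
  have hψ : Ψ = (∫ z, g z * γ z) • ψ := by
    ext y
    exact (hΨ y).trans (integral_dualPairing_mul_gaborAtom ψ g γ y)
  rw [← hu, hψ, map_smul, smul_eq_mul]

theorem dualPairing_comm (f ψ : 𝓢(V, ℂ)) : dualPairing f ψ = dualPairing ψ f := by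
  simp only [dualPairing_apply, mul_comm]

theorem exists_eq_dualPairing_of_rapidDecay {u : 𝓢(V, ℂ) →L[ℂ] ℂ} {g γ : 𝓢(V, ℂ)}
    (hgγ : ∫ z, g z * γ z ≠ 0) (hu : RapidDecay fun p => u (gaborAtom γ p)) :
    ∃ f, u = dualPairing f := by
  obtain ⟨Ψ, -, hΨ⟩ := exists_pettis_integral_smul (μ := volume)
    (u.continuous.comp (continuous_gaborAtom γ)) hu
    (continuous_gaborAtom_phaseReflection g) (polynomialGrowth_gaborAtom_phaseReflection g)
  refine ⟨(∫ z, g z * γ z)⁻¹ • Ψ, ContinuousLinearMap.ext fun ψ => ?_⟩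
  rw [dualPairing_comm, map_smul, hΨ, smul_eq_mul, eq_inv_mul_iff_mul_eq₀ hgγ,
    ← integral_dualPairing_mul_clm_gaborAtom]
  simp only [Function.comp_apply, mul_comm]

theorem exists_eq_dualPairing_iff_rapidDecay {u : 𝓢(V, ℂ) →L[ℂ] ℂ} {g γ : 𝓢(V, ℂ)}
    (hgγ : ∫ z, g z * γ z ≠ 0) :
    (∃ f, u = dualPairing f) ↔ RapidDecay fun p => u (gaborAtom γ p) := by
  refine ⟨?_, exists_eq_dualPairing_of_rapidDecay hgγ⟩
  rintro ⟨f, rfl⟩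
  exact rapidDecay_dualPairing_gaborAtom f γ

end Inversion

section Window

variable {V : Type*} [NormedAddCommGroup V] [InnerProductSpace ℝ V] [FiniteDimensional ℝ V]
  [MeasurableSpace V] [BorelSpace V]

theorem integral_mul_conj_ne_zero {g γ : 𝓢(V, ℂ)} (hg : g ≠ 0)
    (hγ : ∀ y, γ y = starRingEnd ℂ (g y)) : ∫ y, g y * γ y ≠ 0 := by
  have hL2 := inner_toL2_toL2_eq g g volume
  simp only [RCLike.inner_apply, ← hγ] at hL2
  rw [← hL2, inner_self_ne_zero]
  exact (map_ne_zero_iff (toLpCLM ℂ ℂ 2 volume) (injective_toLp 2 volume)).2 hg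

variable (V) in
/-- Rescaling of the frequency variable, from the angular frequency `ξ` of `e^{i⟪y, ξ⟫}` to that of
the conjugate character `e^{-i⟪y, ξ⟫} = 𝐞 ⟪y, -ξ / 2π⟫`. -/
noncomputable def conjAngularFrequency : (V × V) ≃L[ℝ] V × V :=
  (ContinuousLinearEquiv.refl ℝ V).prodCongr
    (ContinuousLinearEquiv.smulLeft (Units.mk0 (-(2 * Real.pi)⁻¹) (neg_ne_zero.2 (by positivity))))

theorem eq_gaborAtom_conjAngularFrequency {g γ : 𝓢(V, ℂ)} (hγ : ∀ y, γ y = starRingEnd ℂ (g y))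
    {x ξ : V} {h : 𝓢(V, ℂ)} (hh : ∀ y, h y =
      starRingEnd ℂ (Complex.exp (Complex.I * (⟪y - x, ξ⟫ : ℝ)) * g (y - x))) :
    h = gaborAtom γ (conjAngularFrequency V (x, ξ)) := by
  ext y
  have hphase : starRingEnd ℂ (Complex.exp (Complex.I * (⟪y - x, ξ⟫ : ℝ))) =
      𝐞 ⟪y - x, -(2 * Real.pi)⁻¹ • ξ⟫ := by
    rw [Real.fourierChar_apply, ← Complex.exp_conj, inner_smul_right, map_mul, Complex.conj_I,
      Complex.conj_ofReal]
    congr 1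
    push_cast
    field_simp
  rw [hh, map_mul, hphase, ← hγ, gaborAtom_apply]
  rfl

end Window

end FBI

open RealInnerProductSpace in
theorem schwartz_iff_fbi_rapid_decay_general {V : Type*} [NormedAddCommGroup V]
    [InnerProductSpace ℝ V] [FiniteDimensional ℝ V] [MeasurableSpace V] [BorelSpace V]
    (g : SchwartzMap V ℂ) (hg : g ≠ 0) (u : SchwartzMap V ℂ →L[ℂ] ℂ)
    (φ : V → V → SchwartzMap V ℂ)
    (hφ : ∀ x ξ y, φ x ξ y =
      starRingEnd ℂ (Complex.exp (Complex.I * (⟪y - x, ξ⟫ : ℝ)) * g (y - x)))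
    (T : V → V → ℂ)
    (hT : ∀ x ξ, T x ξ =
      (((2 * Real.pi) ^ (-(Module.finrank ℝ V : ℝ) / 2) : ℝ) : ℂ) * u (φ x ξ)) :
    (∃ f : SchwartzMap V ℂ, ∀ ψ : SchwartzMap V ℂ, u ψ = ∫ y, f y * ψ y) ↔
      (∀ N : ℕ, ∃ C : ℝ, 0 < C ∧ ∀ x ξ,
        ‖T x ξ‖ ≤ C * Real.sqrt (1 + ‖x‖ ^ 2 + ‖ξ‖ ^ 2) ^ (-(N : ℝ))) := by
  have hγ (y : V) : φ 0 0 y = starRingEnd ℂ (g y) := by simp [hφ]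
  obtain ⟨c, hc, hT⟩ : ∃ c : ℂ, c ≠ 0 ∧ ∀ x ξ, T x ξ = c * u (φ x ξ) :=
    ⟨_, by exact_mod_cast (by positivity : (0 : ℝ) < _).ne', hT⟩
  have hTu : Function.uncurry T =
      fun p => c * u (FBI.gaborAtom (φ 0 0) (FBI.conjAngularFrequency V p)) :=
    funext fun p =>
      (hT p.1 p.2).trans (by rw [FBI.eq_gaborAtom_conjAngularFrequency hγ (hφ p.1 p.2)])
  rw [← FBI.rapidDecay_uncurry_iff, hTu, FBI.rapidDecay_const_mul_iff hc]
  refine Iff.trans ?_ <|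
    (FBI.exists_eq_dualPairing_iff_rapidDecay (FBI.integral_mul_conj_ne_zero hg hγ)).trans
    (FBI.rapidDecay_comp_equiv_iff (FBI.conjAngularFrequency V)).symm
  exact exists_congr fun f => (ContinuousLinearMap.ext_iff (g := FBI.dualPairing f)).symm

open RealInnerProductSpace in
/-- Let `g ∈ 𝒮(ℝ^d)` be nonzero and `u ∈ 𝒮'(ℝ^d)`, with
`𝒯_g u(x,ξ) = (2π)^{-d/2} (u, T_x M_ξ g)` realized via the conjugated window
`φ x ξ : y ↦ conj((T_x M_ξ g)(y))`. Then `u ∈ 𝒮(ℝ^d)` (i.e. `u` is given by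
integration against a Schwartz function) if and only if for every `N ≥ 0` there
is `C_N > 0` with `|𝒯_g u(x,ξ)| ≤ C_N ⟨(x,ξ)⟩^{-N}` for all `(x,ξ)`. -/
theorem schwartz_iff_fbi_rapid_decay (d : ℕ)
    (g : SchwartzMap (EuclideanSpace ℝ (Fin d)) ℂ) (hg : g ≠ 0)
    (u : SchwartzMap (EuclideanSpace ℝ (Fin d)) ℂ →L[ℂ] ℂ)
    (φ : EuclideanSpace ℝ (Fin d) → EuclideanSpace ℝ (Fin d) →
      SchwartzMap (EuclideanSpace ℝ (Fin d)) ℂ)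
    (hφ : ∀ x ξ y, φ x ξ y =
      starRingEnd ℂ (Complex.exp (Complex.I * (⟪y - x, ξ⟫ : ℝ)) * g (y - x)))
    (T : EuclideanSpace ℝ (Fin d) → EuclideanSpace ℝ (Fin d) → ℂ)
    (hT : ∀ x ξ, T x ξ = (((2 * Real.pi) ^ (-(d : ℝ) / 2) : ℝ) : ℂ) * u (φ x ξ)) :
    (∃ f : SchwartzMap (EuclideanSpace ℝ (Fin d)) ℂ,
        ∀ ψ : SchwartzMap (EuclideanSpace ℝ (Fin d)) ℂ, u ψ = ∫ y, f y * ψ y) ↔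
      (∀ N : ℕ, ∃ C : ℝ, 0 < C ∧ ∀ x ξ,
        ‖T x ξ‖ ≤ C * Real.sqrt (1 + ‖x‖ ^ 2 + ‖ξ‖ ^ 2) ^ (-(N : ℝ))) :=
  schwartz_iff_fbi_rapid_decay_general g hg u φ hφ T (by simpa only [finrank_euclideanSpace_fin])
end

section
/- If g, h ∈ 𝒮(ℝ^d) and u ∈ 𝒮'(ℝ^d) then 𝒯_h^* 𝒯_g u = (h, g)_{L²} u. In particular, if g is nonzero then ‖g‖_{L²}^{−2} 𝒯_g^* 𝒯_g u = u (the inversion formula). -/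
/-!
A tempered distribution `u` is bounded by finitely many Schwartz seminorms, so by Hahn–Banach it
factors through a Banach space of weighted derivatives, where it commutes with Bochner integrals.
It is therefore enough to recover a test function `f` pointwise from its short-time Fourier
transform `S`, provided the integral converges in every Schwartz seminorm. It does: the
time-frequency shifts of a window grow polynomially in each seminorm, while `S` decays rapidly, in
`x` because the two Schwartz functions separate, and in `ξ` by the same argument on the Fourier
side. Pointwise, `S (x, ·)` is an inverse Fourier transform of `y ↦ f (y + x) h y`, so integrating
out `ξ` is Fourier inversion and integrating out `x` leaves the inner product of the windows.
-/

open MeasureTheory SchwartzMap Filter Topology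
open scoped BoundedContinuousFunction FourierTransform RealInnerProductSpace

noncomputable section

set_option maxSynthPendingDepth 3

section WeakIntegral

theorem exists_strongDual_comp_eq_of_norm_le {𝕜 X B : Type*} [RCLike 𝕜] [AddCommGroup X]
    [Module 𝕜 X] [NormedAddCommGroup B] [NormedSpace 𝕜 B] (T : X →ₗ[𝕜] B) (u : Module.Dual 𝕜 X)
    (C : ℝ) (hu : ∀ x, ‖u x‖ ≤ C * ‖T x‖) : ∃ v : StrongDual 𝕜 B, ∀ x, v (T x) = u x := by
  have hker : u ∈ T.ker.dualAnnihilator := by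
    refine (Submodule.mem_dualAnnihilator u).2 fun x hx => norm_le_zero_iff.1 ?_
    simpa [LinearMap.mem_ker.1 hx] using hu x
  obtain ⟨w, rfl⟩ := T.range_dualMap_eq_dualAnnihilator_ker.ge hker
  let w₀ : StrongDual 𝕜 T.range := (w.domRestrict T.range).mkContinuous C <| by
    rintro ⟨-, x, rfl⟩
    exact hu x
  obtain ⟨v, hv, -⟩ := exists_extension_norm_eq T.range w₀
  exact ⟨v, fun x => hv ⟨T x, x, rfl⟩⟩

variable {𝕜 E F : Type*} [RCLike 𝕜] [NormedAddCommGroup E] [NormedSpace ℝ E]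
  [NormedAddCommGroup F] [NormedSpace ℝ F] [NormedSpace 𝕜 F] [SMulCommClass ℝ 𝕜 F]

variable (𝕜) in
/-- The weighted derivative `y ↦ ‖y‖ ^ k • Dⁿf(y)` of a Schwartz function as a bounded continuous
function. Its norm is the Schwartz seminorm of index `(k, n)`, so a tempered distribution factors
through finitely many weighted derivatives, that is, through a Banach space. -/
def weightedDeriv (k n : ℕ) : 𝓢(E, F) →L[𝕜] E →ᵇ E [×n]→L[ℝ] F :=
  mkCLMtoNormedSpace
    (fun f => .ofNormedAddCommGroup (fun y => ‖y‖ ^ k • iteratedFDeriv ℝ n f y)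
      ((continuous_norm.pow k).smul ((f.smooth n).continuous_iteratedFDeriv le_rfl))
      (SchwartzMap.seminorm 𝕜 k n f) fun y => by
        simpa only [norm_smul, norm_pow, norm_norm] using SchwartzMap.le_seminorm 𝕜 k n f y)
    (fun f g => by
      ext1 y
      exact (congrArg _ (iteratedFDeriv_add_apply (f.contDiffAt n) (g.contDiffAt n))).trans
        (smul_add _ _ _))
    (fun c f => by
      ext1 y
      exact (congrArg _ (iteratedFDeriv_const_smul_apply (f.contDiffAt n))).trans
        (smul_comm _ _ _))
    ⟨{(k, n)}, 1, zero_le_one, fun f => by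
      rw [one_mul, Finset.sup_singleton]
      exact BoundedContinuousFunction.norm_ofNormedAddCommGroup_le _ (apply_nonneg _ _) _⟩

@[simp]
theorem weightedDeriv_apply (k n : ℕ) (f : 𝓢(E, F)) (y : E) :
    weightedDeriv 𝕜 k n f y = ‖y‖ ^ k • iteratedFDeriv ℝ n f y := rfl

theorem norm_weightedDeriv (k n : ℕ) (f : 𝓢(E, F)) :
    ‖weightedDeriv 𝕜 k n f‖ = SchwartzMap.seminorm 𝕜 k n f := by
  have norm_apply (y : E) :
      ‖weightedDeriv 𝕜 k n f y‖ = ‖y‖ ^ k * ‖iteratedFDeriv ℝ n f y‖ := by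
    rw [weightedDeriv_apply, norm_smul, norm_pow, norm_norm]
  apply le_antisymm
  · refine (BoundedContinuousFunction.norm_le (apply_nonneg _ _)).2 fun y => ?_
    exact (norm_apply y).trans_le (SchwartzMap.le_seminorm 𝕜 k n f y)
  · refine SchwartzMap.seminorm_le_bound 𝕜 k n f (norm_nonneg _) fun y => ?_
    exact (norm_apply y).symm.trans_le ((weightedDeriv 𝕜 k n f).norm_coe_le_norm y)

theorem exists_strongDual_weightedDeriv (u : 𝓢(E, F) →L[𝕜] 𝕜) :
    ∃ (s : Finset (ℕ × ℕ)) (v : StrongDual 𝕜 (∀ i : s, E →ᵇ E [×i.1.2]→L[ℝ] F)),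
      ∀ f, v (fun i => weightedDeriv 𝕜 i.1.1 i.1.2 f) = u f := by
  obtain ⟨s, C, -, hC⟩ := Seminorm.bound_of_continuous (schwartz_withSeminorms 𝕜 E F)
    ((normSeminorm 𝕜 𝕜).comp u.toLinearMap) u.continuous.norm
  obtain ⟨v, hv⟩ := exists_strongDual_comp_eq_of_norm_le
    (LinearMap.pi fun i : s => (weightedDeriv 𝕜 i.1.1 i.1.2).toLinearMap)
    u.toLinearMap C fun f => by
      refine (hC f).trans (mul_le_mul_of_nonneg_left ?_ C.2)
      refine Seminorm.finset_sup_apply_le (norm_nonneg _) fun i hi => ?_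
      exact (norm_weightedDeriv i.1 i.2 f).symm.trans_le
        (norm_le_pi_norm (fun j : s => weightedDeriv 𝕜 j.1.1 j.1.2 f) ⟨i, hi⟩)
  exact ⟨s, v, hv⟩

variable {Z : Type*} [MeasurableSpace Z] {μ : Measure Z} {Ψ : Z → 𝓢(E, F)}

theorem integrable_iteratedFDeriv_of_weightedDeriv {n : ℕ}
    (hΨ : Integrable (fun z => weightedDeriv 𝕜 0 n (Ψ z)) μ) (y : E) :
    Integrable (fun z => iteratedFDeriv ℝ n (Ψ z) y) μ := by
  simpa using (BoundedContinuousFunction.evalCLM 𝕜 y).integrable_comp hΨ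

theorem integrable_apply_of_weightedDeriv (hΨ : Integrable (fun z => weightedDeriv 𝕜 0 0 (Ψ z)) μ)
    (y : E) : Integrable (fun z => Ψ z y) μ := by
  simpa using (continuousMultilinearCurryFin0 ℝ E F).toContinuousLinearEquiv.integrable_comp_iff.2
    (integrable_iteratedFDeriv_of_weightedDeriv hΨ y)

theorem iteratedFDeriv_integral (hΨ : ∀ n, Integrable (fun z => weightedDeriv 𝕜 0 n (Ψ z)) μ)
    (n : ℕ) :
    iteratedFDeriv ℝ n (fun y => ∫ z, Ψ z y ∂μ) =
      fun y => ∫ z, iteratedFDeriv ℝ n (Ψ z) y ∂μ := by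
  have hint (n : ℕ) := integrable_iteratedFDeriv_of_weightedDeriv (hΨ n)
  induction n with
  | zero =>
    ext1 y
    simp only [iteratedFDeriv_zero_eq_comp, Function.comp_apply]
    exact ((continuousMultilinearCurryFin0 ℝ E F).symm.toContinuousLinearEquiv.integral_comp_comm
      _).symm
  | succ n ih =>
    let I := (continuousMultilinearCurryLeftEquiv ℝ (fun _ : Fin (n + 1) => E) F)
    have hI (z : Z) (y : E) : fderiv ℝ (iteratedFDeriv ℝ n (Ψ z)) y =
        I (iteratedFDeriv ℝ (n + 1) (Ψ z) y) := by
      rw [fderiv_iteratedFDeriv, Function.comp_apply]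
    have hderiv (y : E) : HasFDerivAt (fun y => ∫ z, iteratedFDeriv ℝ n (Ψ z) y ∂μ)
        (∫ z, I (iteratedFDeriv ℝ (n + 1) (Ψ z) y) ∂μ) y := by
      refine hasFDerivAt_integral_of_dominated_of_fderiv_le
        (F' := fun y z => I (iteratedFDeriv ℝ (n + 1) (Ψ z) y))
        (bound := fun z => ‖weightedDeriv 𝕜 0 (n + 1) (Ψ z)‖) univ_mem
        (.of_forall fun y => (hint n y).1) (hint n y)
        (I.continuous.comp_aestronglyMeasurable (hint (n + 1) y).1)
        (.of_forall fun z y _ => ?_) (hΨ (n + 1)).norm (.of_forall fun z y _ => ?_)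
      · rw [I.norm_map]
        simpa using (weightedDeriv 𝕜 0 (n + 1) (Ψ z)).norm_coe_le_norm y
      · rw [← hI]
        exact (((Ψ z).smooth (n + 1)).differentiable_iteratedFDeriv
          (by exact_mod_cast n.lt_succ_self) y).hasFDerivAt
    ext1 y
    rw [iteratedFDeriv_succ_eq_comp_left, Function.comp_apply, ih, (hderiv y).fderiv,
      LinearIsometryEquiv.symm_apply_eq]
    exact I.toContinuousLinearEquiv.integral_comp_comm _

theorem integral_tempered_apply [CompleteSpace F]
    (hΨ : ∀ k n, Integrable (fun z => weightedDeriv 𝕜 k n (Ψ z)) μ) {f : 𝓢(E, F)}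
    (hf : ∀ y, ∫ z, Ψ z y ∂μ = f y) (u : 𝓢(E, F) →L[𝕜] 𝕜) :
    ∫ z, u (Ψ z) ∂μ = u f := by
  have integral_weightedDeriv (k n : ℕ) :
      ∫ z, weightedDeriv 𝕜 k n (Ψ z) ∂μ = weightedDeriv 𝕜 k n f := by
    ext1 y
    calc (∫ z, weightedDeriv 𝕜 k n (Ψ z) ∂μ) y
        = ∫ z, weightedDeriv 𝕜 k n (Ψ z) y ∂μ :=
          ((BoundedContinuousFunction.evalCLM 𝕜 y).integral_comp_comm (hΨ k n)).symm
      _ = ‖y‖ ^ k • iteratedFDeriv ℝ n (fun y => ∫ z, Ψ z y ∂μ) y := by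
          rw [iteratedFDeriv_integral (hΨ 0), ← integral_smul]
          rfl
      _ = weightedDeriv 𝕜 k n f y := by rw [funext hf, weightedDeriv_apply]
  obtain ⟨s, v, hv⟩ := exists_strongDual_weightedDeriv u
  have hint (i : s) := hΨ i.1.1 i.1.2
  calc ∫ z, u (Ψ z) ∂μ = ∫ z, v (fun i => weightedDeriv 𝕜 i.1.1 i.1.2 (Ψ z)) ∂μ := by
        simp only [hv]
    _ = v (∫ z, (fun i : s => weightedDeriv 𝕜 i.1.1 i.1.2 (Ψ z)) ∂μ) :=
        v.integral_comp_comm (Integrable.of_eval hint)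
    _ = v (fun i => weightedDeriv 𝕜 i.1.1 i.1.2 f) := by
        congr 1
        ext1 i
        rw [eval_integral hint, integral_weightedDeriv]
    _ = u f := hv f

end WeakIntegral

section Translation

theorem one_add_norm_le_mul_one_add_norm_sub {E : Type*} [SeminormedAddCommGroup E] (x y : E) :
    1 + ‖y‖ ≤ (1 + ‖x‖) * (1 + ‖y - x‖) := by
  nlinarith [norm_le_norm_sub_add y x, norm_nonneg x, norm_nonneg (y - x)]

variable {𝕜 E F : Type*} [RCLike 𝕜] [NormedAddCommGroup E] [NormedSpace ℝ E]
  [NormedAddCommGroup F] [NormedSpace ℝ F] [NormedSpace 𝕜 F]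

theorem iteratedFDeriv_compSubConstCLM (n : ℕ) (x : E) (f : 𝓢(E, F)) (y : E) :
    iteratedFDeriv ℝ n (f.compSubConstCLM 𝕜 x) y = iteratedFDeriv ℝ n f (y - x) :=
  iteratedFDeriv_comp_sub n x y

variable [SMulCommClass ℝ 𝕜 F]

theorem seminorm_compSubConstCLM_le (k n : ℕ) (x : E) (f : 𝓢(E, F)) :
    SchwartzMap.seminorm 𝕜 k n (f.compSubConstCLM 𝕜 x) ≤
      (1 + ‖x‖) ^ k * (2 ^ k * (Finset.Iic (k, n)).sup (schwartzSeminormFamily 𝕜 E F) f) := by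
  refine SchwartzMap.seminorm_le_bound 𝕜 k n _ (by positivity) fun y => ?_
  calc ‖y‖ ^ k * ‖iteratedFDeriv ℝ n (f.compSubConstCLM 𝕜 x) y‖
      ≤ ((1 + ‖x‖) * (1 + ‖y - x‖)) ^ k * ‖iteratedFDeriv ℝ n f (y - x)‖ := by
        rw [iteratedFDeriv_compSubConstCLM]
        gcongr
        linarith [one_add_norm_le_mul_one_add_norm_sub x y]
    _ = (1 + ‖x‖) ^ k * ((1 + ‖y - x‖) ^ k * ‖iteratedFDeriv ℝ n f (y - x)‖) := by
        rw [mul_pow, mul_assoc]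
    _ ≤ _ := by
        refine mul_le_mul_of_nonneg_left ?_ (by positivity)
        exact one_add_le_sup_seminorm_apply (m := (k, n)) le_rfl le_rfl f (y - x)

theorem exists_seminorm_compSubConstCLM_le {q : Seminorm 𝕜 𝓢(E, F)} (hq : Continuous q) :
    ∃ (N : ℕ) (q' : Seminorm 𝕜 𝓢(E, F)), Continuous q' ∧
      ∀ x f, q (f.compSubConstCLM 𝕜 x) ≤ (1 + ‖x‖) ^ N * q' f := by
  obtain ⟨s, C, -, hC⟩ := Seminorm.bound_of_continuous (schwartz_withSeminorms 𝕜 E F) q hq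
  let N := s.sup Prod.fst
  let p := (s.biUnion Finset.Iic).sup (schwartzSeminormFamily 𝕜 E F)
  have hp : Continuous p :=
    Seminorm.continuous_finsetSup fun i _ => (schwartz_withSeminorms 𝕜 E F).continuous_seminorm i
  refine ⟨N, (C * 2 ^ N) • p, hp.const_smul (C * 2 ^ N), fun x f => ?_⟩
  have hsup : s.sup (schwartzSeminormFamily 𝕜 E F) (f.compSubConstCLM 𝕜 x) ≤
      (1 + ‖x‖) ^ N * (2 ^ N * p f) := by
    refine Seminorm.finset_sup_apply_le (by positivity) fun i hi => ?_
    refine (seminorm_compSubConstCLM_le i.1 i.2 x f).trans ?_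
    have hN : i.1 ≤ N := Finset.le_sup (f := Prod.fst) hi
    have hmono : (Finset.Iic i).sup (schwartzSeminormFamily 𝕜 E F) f ≤ p f :=
      Finset.sup_mono (f := schwartzSeminormFamily 𝕜 E F) (Finset.subset_biUnion_of_mem _ hi) f
    gcongr
    · linarith [norm_nonneg x]
    · exact one_le_two
  calc q (f.compSubConstCLM 𝕜 x)
      ≤ C * s.sup (schwartzSeminormFamily 𝕜 E F) (f.compSubConstCLM 𝕜 x) := hC _
    _ ≤ C * ((1 + ‖x‖) ^ N * (2 ^ N * p f)) := by gcongr
    _ = (1 + ‖x‖) ^ N * ((C * 2 ^ N : ℝ) * p f) := by ring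

theorem seminorm_compSubConstCLM_sub_le (k n : ℕ) (x : E) (f : 𝓢(E, F)) :
    SchwartzMap.seminorm 𝕜 k n (f.compSubConstCLM 𝕜 x - f) ≤
      ‖x‖ * ((1 + ‖x‖) ^ k *
        (2 ^ k * (Finset.Iic (k, n + 1)).sup (schwartzSeminormFamily 𝕜 E F) f)) := by
  refine SchwartzMap.seminorm_le_bound 𝕜 k n _ (by positivity) fun y => ?_
  have hderiv : iteratedFDeriv ℝ n (f.compSubConstCLM 𝕜 x - f) y =
      iteratedFDeriv ℝ n f (y - x) - iteratedFDeriv ℝ n f y := by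
    rw [← iteratedFDeriv_comp_sub]
    exact iteratedFDeriv_sub_apply ((f.compSubConstCLM 𝕜 x).contDiffAt n) (f.contDiffAt n)
  have hdiff : Differentiable ℝ (iteratedFDeriv ℝ n f) :=
    (f.smooth (n + 1)).differentiable_iteratedFDeriv (by exact_mod_cast n.lt_succ_self)
  have hfderiv : ∀ z ∈ Metric.closedBall y ‖x‖,
      ‖fderiv ℝ (fun z => ‖y‖ ^ k • iteratedFDeriv ℝ n f z) z‖ ≤ (1 + ‖x‖) ^ k *
        (2 ^ k * (Finset.Iic (k, n + 1)).sup (schwartzSeminormFamily 𝕜 E F) f) := fun z hz => by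
    rw [fderiv_fun_const_smul (hdiff z), norm_smul, norm_fderiv_iteratedFDeriv, norm_pow, norm_norm]
    have htranslate := SchwartzMap.le_seminorm 𝕜 k (n + 1) (f.compSubConstCLM 𝕜 (y - z)) y
    rw [iteratedFDeriv_compSubConstCLM, sub_sub_cancel] at htranslate
    refine htranslate.trans ((seminorm_compSubConstCLM_le k (n + 1) (y - z) f).trans ?_)
    gcongr
    rwa [← dist_eq_norm, dist_comm]
  rw [hderiv, ← norm_norm y, ← norm_pow, ← norm_smul, smul_sub, mul_comm ‖x‖]
  simpa using (convex_closedBall y ‖x‖).norm_image_sub_le_of_norm_fderiv_le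
    (fun z _ => (hdiff z).const_smul (‖y‖ ^ k)) hfderiv (Metric.mem_closedBall_self (norm_nonneg x))
    (y := y - x) (by simp)

theorem continuous_compSubConstCLM :
    Continuous fun p : E × 𝓢(E, F) => p.2.compSubConstCLM 𝕜 p.1 := by
  refine continuous_iff_continuousAt.2 fun ⟨x₀, f₀⟩ => ?_
  refine ((schwartz_withSeminorms 𝕜 E F).tendsto_nhds _ _).2 fun ⟨k, n⟩ ε hε => ?_
  let q (m : ℕ) : Seminorm 𝕜 𝓢(E, F) := (Finset.Iic (k, m)).sup (schwartzSeminormFamily 𝕜 E F)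
  have hq (m : ℕ) : Continuous (q m) :=
    Seminorm.continuous_finsetSup fun i _ => (schwartz_withSeminorms 𝕜 E F).continuous_seminorm i
  let f₁ := f₀.compSubConstCLM 𝕜 x₀
  let bound (p : E × 𝓢(E, F)) : ℝ := (1 + ‖p.1‖) ^ k * (2 ^ k * q n (p.2 - f₀)) +
    ‖p.1 - x₀‖ * ((1 + ‖p.1 - x₀‖) ^ k * (2 ^ k * q (n + 1) f₁))
  have hle (p : E × 𝓢(E, F)) :
      SchwartzMap.seminorm 𝕜 k n (p.2.compSubConstCLM 𝕜 p.1 - f₁) ≤ bound p := by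
    have hsplit : p.2.compSubConstCLM 𝕜 p.1 - f₁ =
        (p.2 - f₀).compSubConstCLM 𝕜 p.1 + (f₁.compSubConstCLM 𝕜 (p.1 - x₀) - f₁) := by
      rw [map_sub, compSubConstCLM_comp, add_sub_cancel, sub_add_sub_cancel]
    rw [hsplit]
    exact (map_add_le_add _ _ _).trans (add_le_add (seminorm_compSubConstCLM_le k n p.1 _)
      (seminorm_compSubConstCLM_sub_le k n (p.1 - x₀) f₁))
  have hbound : Continuous bound := by
    have : Continuous fun p : E × 𝓢(E, F) => q n (p.2 - f₀) :=
      (hq n).comp (continuous_snd.sub continuous_const)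
    fun_prop
  have hlim : Tendsto bound (𝓝 (x₀, f₀)) (𝓝 0) := hbound.tendsto' _ _ (by simp [bound])
  exact (hlim.eventually_lt_const hε).mono fun p hp => (hle p).trans_lt hp

end Translation

section TimeFrequencyShift

variable {V F : Type*} [NormedAddCommGroup V] [InnerProductSpace ℝ V] [FiniteDimensional ℝ V]
  [MeasurableSpace V] [BorelSpace V] [NormedAddCommGroup F] [NormedSpace ℂ F]

theorem fourierInv_compSubConstCLM_apply (a : V) (f : 𝓢(V, F)) (y : V) :
    𝓕⁻ (f.compSubConstCLM ℂ a) y =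
      Complex.exp ((2 * Real.pi * ⟪a, y⟫ : ℝ) * Complex.I) • 𝓕⁻ f y := by
  simp only [fourierInv_coe, Real.fourierInv_eq']
  rw [← integral_add_right_eq_self _ a, ← integral_smul]
  congr 1 with v
  rw [compSubConstCLM_apply, add_sub_cancel_right, smul_smul, ← Complex.exp_add, inner_add_left]
  push_cast
  ring_nf

/-- The modulation operator `M_ξ`, multiplication by the character `y ↦ exp (i⟨y, ξ⟩)`. It is
encoded as a translation conjugated by the Fourier transform, so that bounds and continuity in `ξ`
are inherited from those of translations. -/
def modulation (ξ : V) : 𝓢(V, F) →L[ℂ] 𝓢(V, F) :=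
  FourierTransform.fourierInvCLM ℂ 𝓢(V, F) ∘L compSubConstCLM ℂ ((2 * Real.pi)⁻¹ • ξ) ∘L
    FourierTransform.fourierCLM ℂ 𝓢(V, F)

theorem modulation_apply [CompleteSpace F] (ξ : V) (f : 𝓢(V, F)) (y : V) :
    modulation ξ f y = Complex.exp (Complex.I * (⟪y, ξ⟫ : ℝ)) • f y := by
  have hphase : 2 * Real.pi * ⟪(2 * Real.pi)⁻¹ • ξ, y⟫ = ⟪y, ξ⟫ := by
    rw [real_inner_smul_left, mul_inv_cancel_left₀ (by positivity), real_inner_comm]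
  calc modulation ξ f y
      = (𝓕⁻ ((𝓕 f).compSubConstCLM ℂ ((2 * Real.pi)⁻¹ • ξ)) : 𝓢(V, F)) y := rfl
    _ = _ := by
      rw [fourierInv_compSubConstCLM_apply, hphase, FourierTransform.fourierInv_fourier_eq,
        mul_comm Complex.I]

/-- The time-frequency shift `T_x M_ξ` at the phase space point `z = (x, ξ)`. -/
def timeFrequencyShift (z : V × V) : 𝓢(V, F) →L[ℂ] 𝓢(V, F) :=
  compSubConstCLM ℂ z.1 ∘L modulation (F := F) z.2

theorem timeFrequencyShift_apply [CompleteSpace F] (z : V × V) (f : 𝓢(V, F)) (y : V) :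
    timeFrequencyShift z f y = Complex.exp (Complex.I * (⟪y - z.1, z.2⟫ : ℝ)) • f (y - z.1) :=
  modulation_apply z.2 f (y - z.1)

theorem continuous_timeFrequencyShift (f : 𝓢(V, F)) :
    Continuous fun z : V × V => timeFrequencyShift z f := by
  have hmod : Continuous fun z : V × V => modulation z.2 f :=
    (FourierTransform.fourierInvCLM ℂ 𝓢(V, F)).continuous.comp <|
      (continuous_compSubConstCLM (𝕜 := ℂ)).comp <|
        (continuous_snd.const_smul (2 * Real.pi)⁻¹).prodMk continuous_const
  exact (continuous_compSubConstCLM (𝕜 := ℂ)).comp (continuous_fst.prodMk hmod)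

theorem exists_seminorm_timeFrequencyShift_le {q : Seminorm ℂ 𝓢(V, F)} (hq : Continuous q)
    (f : 𝓢(V, F)) :
    ∃ (N : ℕ) (C : ℝ), ∀ z : V × V, q (timeFrequencyShift z f) ≤ (1 + ‖z‖) ^ N * C := by
  obtain ⟨N₁, q₁, hq₁, hle₁⟩ := exists_seminorm_compSubConstCLM_le hq
  obtain ⟨N₂, q₂, -, hle₂⟩ := exists_seminorm_compSubConstCLM_le
    (q := q₁.comp (FourierTransform.fourierInvCLM ℂ 𝓢(V, F)).toLinearMap)
    (hq₁.comp (FourierTransform.fourierInvCLM ℂ 𝓢(V, F)).continuous)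
  refine ⟨N₁ + N₂, q₂ (𝓕 f), fun z => ?_⟩
  have hfreq : ‖(2 * Real.pi)⁻¹ • z.2‖ ≤ ‖z.2‖ := by
    rw [norm_smul, norm_inv, Real.norm_of_nonneg (by positivity)]
    exact mul_le_of_le_one_left (norm_nonneg _)
      (inv_le_one_of_one_le₀ (by linarith [Real.pi_gt_three]))
  calc q (timeFrequencyShift z f)
      ≤ (1 + ‖z.1‖) ^ N₁ * q₁ (modulation z.2 f) := hle₁ z.1 _
    _ ≤ (1 + ‖z.1‖) ^ N₁ * ((1 + ‖(2 * Real.pi)⁻¹ • z.2‖) ^ N₂ * q₂ (𝓕 f)) := by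
        gcongr
        exact hle₂ _ (𝓕 f)
    _ ≤ (1 + ‖z‖) ^ N₁ * ((1 + ‖z‖) ^ N₂ * q₂ (𝓕 f)) := by
        gcongr
        · exact norm_fst_le z
        · exact hfreq.trans (norm_snd_le z)
    _ = (1 + ‖z‖) ^ (N₁ + N₂) * q₂ (𝓕 f) := by rw [pow_add, mul_assoc]

end TimeFrequencyShift

section Decay

variable {E F G : Type*} [NormedAddCommGroup E] [NormedAddCommGroup F]
  [NormedAddCommGroup G]

theorem integrable_of_one_add_norm_pow_mul_norm_le [MeasurableSpace E] [BorelSpace E]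
    [SecondCountableTopology E] {μ : Measure E} [μ.HasTemperateGrowth] {f : E → F}
    (hf : AEStronglyMeasurable f μ) {C : ℝ}
    (hC : ∀ x, (1 + ‖x‖) ^ μ.integrablePower * ‖f x‖ ≤ C) : Integrable f μ := by
  have hbound (x : E) : ‖f x‖ ≤ C :=
    (le_mul_of_one_le_left (norm_nonneg _)
      (one_le_pow₀ (by linarith [norm_nonneg x]))).trans (hC x)
  have hdecay (x : E) : ‖x‖ ^ (0 + μ.integrablePower) * ‖f x‖ ≤ C := by
    refine le_trans ?_ (hC x)
    rw [zero_add]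
    gcongr
    linarith
  simpa only [pow_zero, one_mul, integrable_norm_iff hf] using
    integrable_of_le_of_pow_mul_le hbound hdecay hf

variable [NormedSpace ℝ E] [NormedSpace ℝ F] [NormedSpace ℝ G]

theorem exists_one_add_norm_pow_mul_norm_le (f : 𝓢(E, F)) (N : ℕ) :
    ∃ C, ∀ y, (1 + ‖y‖) ^ N * ‖f y‖ ≤ C :=
  ⟨_, fun y => by
    simpa only [norm_iteratedFDeriv_zero] using
      one_add_le_sup_seminorm_apply (𝕜 := ℝ) (m := (N, 0)) le_rfl le_rfl f y⟩

theorem exists_one_add_norm_pow_mul_integral_le [MeasurableSpace E] [BorelSpace E]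
    [SecondCountableTopology E] {μ : Measure E} [μ.HasTemperateGrowth] (f : 𝓢(E, F))
    (g : 𝓢(E, G)) (N : ℕ) :
    ∃ C, ∀ x, (1 + ‖x‖) ^ N * ∫ y, ‖f y‖ * ‖g (y - x)‖ ∂μ ≤ C := by
  obtain ⟨Cf, hCf⟩ := exists_one_add_norm_pow_mul_norm_le f (μ.integrablePower + N)
  obtain ⟨Cg, hCg⟩ := exists_one_add_norm_pow_mul_norm_le g N
  have hint : Integrable (fun y => (1 + ‖y‖) ^ N * ‖f y‖) μ := by
    have hcont : Continuous fun y => (1 + ‖y‖) ^ N * ‖f y‖ :=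
      ((continuous_const.add continuous_norm).pow N).mul f.continuous.norm
    refine integrable_of_one_add_norm_pow_mul_norm_le (C := Cf) hcont.aestronglyMeasurable
      fun y => ?_
    rw [Real.norm_of_nonneg (by positivity), ← mul_assoc, ← pow_add]
    exact hCf y
  refine ⟨∫ y, (1 + ‖y‖) ^ N * ‖f y‖ * Cg ∂μ, fun x => ?_⟩
  rw [← integral_const_mul]
  refine integral_mono_of_nonneg (.of_forall fun y => by positivity) (hint.mul_const Cg)
    (.of_forall fun y => ?_)
  calc (1 + ‖x‖) ^ N * (‖f y‖ * ‖g (y - x)‖)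
      ≤ ((1 + ‖y‖) * (1 + ‖y - x‖)) ^ N * (‖f y‖ * ‖g (y - x)‖) := by
        gcongr
        rw [norm_sub_rev]
        exact one_add_norm_le_mul_one_add_norm_sub y x
    _ = (1 + ‖y‖) ^ N * ‖f y‖ * ((1 + ‖y - x‖) ^ N * ‖g (y - x)‖) := by
        rw [mul_pow, mul_mul_mul_comm]
    _ ≤ (1 + ‖y‖) ^ N * ‖f y‖ * Cg := by
        gcongr
        exact hCg (y - x)

end Decay

section ShortTimeFourier

variable {V : Type*} [NormedAddCommGroup V] [InnerProductSpace ℝ V] [FiniteDimensional ℝ V]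
  [MeasurableSpace V] [BorelSpace V]

/-- The short-time Fourier transform `(x, ξ) ↦ ∫ f(y) (T_x M_ξ h)(y) dy` of `f` with window `h`, in
the bilinear convention: the sesquilinear transform against `T_x M_ξ h` is obtained by conjugating
the window. -/
def shortTimeFourier (f h : 𝓢(V, ℂ)) (z : V × V) : ℂ :=
  ∫ y, f y * timeFrequencyShift z h y

variable (f h : 𝓢(V, ℂ))

theorem continuous_shortTimeFourier : Continuous (shortTimeFourier f h) := by
  refine ((integralCLM ℂ volume ∘L pairing (ContinuousLinearMap.mul ℂ ℂ) f).continuous.comp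
    (continuous_timeFrequencyShift h)).congr fun z => ?_
  rw [Function.comp_apply, ContinuousLinearMap.comp_apply, integralCLM_apply]
  rfl

theorem norm_shortTimeFourier_le (z : V × V) :
    ‖shortTimeFourier f h z‖ ≤ ∫ y, ‖f y‖ * ‖h (y - z.1)‖ := by
  refine (norm_integral_le_integral_norm _).trans_eq ?_
  congr 1 with y
  rw [timeFrequencyShift_apply, norm_mul, norm_smul, mul_comm Complex.I,
    Complex.norm_exp_ofReal_mul_I, one_mul]

-- Parseval turns the frequency shift of `h` into a translation of `𝓕 h`.
theorem norm_shortTimeFourier_le_fourier (z : V × V) :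
    ‖shortTimeFourier f h z‖ ≤
      ∫ η, ‖(𝓕⁻ f : 𝓢(V, ℂ)) η‖ * ‖(𝓕 h : 𝓢(V, ℂ)) (η - (2 * Real.pi)⁻¹ • z.2)‖ := by
  let f₁ := f.compSubConstCLM ℂ (-z.1)
  let h₁ := (𝓕 h).compSubConstCLM ℂ ((2 * Real.pi)⁻¹ • z.2)
  have parseval : shortTimeFourier f h z = ∫ η, (𝓕⁻ f₁ : 𝓢(V, ℂ)) η * h₁ η :=
    calc shortTimeFourier f h z = ∫ y, f y * modulation z.2 h (y - z.1) := rfl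
      _ = ∫ y, f₁ y * (𝓕⁻ h₁ : 𝓢(V, ℂ)) y := by
        rw [← integral_add_right_eq_self _ z.1]
        congr 1 with y
        rw [add_sub_cancel_right, compSubConstCLM_apply, sub_neg_eq_add]
        rfl
      _ = _ := (integral_fourierInv_mul_eq f₁ h₁).symm
  rw [parseval]
  refine (norm_integral_le_integral_norm _).trans_eq ?_
  congr 1 with η
  rw [norm_mul, fourierInv_compSubConstCLM_apply, norm_smul, Complex.norm_exp_ofReal_mul_I,
    one_mul, compSubConstCLM_apply]

theorem exists_one_add_norm_pow_mul_norm_shortTimeFourier_le (N : ℕ) :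
    ∃ C, ∀ z, (1 + ‖z‖) ^ N * ‖shortTimeFourier f h z‖ ≤ C := by
  obtain ⟨C₁, hC₁⟩ := exists_one_add_norm_pow_mul_integral_le (μ := volume) f h N
  obtain ⟨C₂, hC₂⟩ := exists_one_add_norm_pow_mul_integral_le (μ := volume) (𝓕⁻ f) (𝓕 h) N
  refine ⟨max C₁ ((2 * Real.pi) ^ N * C₂), fun z => ?_⟩
  rcases max_choice ‖z.1‖ ‖z.2‖ with hz | hz <;> rw [Prod.norm_def, hz]
  · refine le_max_of_le_left (le_trans ?_ (hC₁ z.1))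
    gcongr
    exact norm_shortTimeFourier_le f h z
  · refine le_max_of_le_right ?_
    let η := (2 * Real.pi)⁻¹ • z.2
    have hη : 1 + ‖z.2‖ ≤ 2 * Real.pi * (1 + ‖η‖) := by
      rw [norm_smul, norm_inv, Real.norm_of_nonneg (by positivity), mul_add,
        mul_inv_cancel_left₀ (by positivity)]
      linarith [Real.pi_gt_three]
    calc (1 + ‖z.2‖) ^ N * ‖shortTimeFourier f h z‖
        ≤ (2 * Real.pi * (1 + ‖η‖)) ^ N *
            ∫ y, ‖(𝓕⁻ f : 𝓢(V, ℂ)) y‖ * ‖(𝓕 h : 𝓢(V, ℂ)) (y - η)‖ := by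
          gcongr
          exact norm_shortTimeFourier_le_fourier f h z
      _ ≤ (2 * Real.pi) ^ N * C₂ := by
          rw [mul_pow, mul_assoc]
          gcongr
          exact hC₂ η

end ShortTimeFourier

section Inversion

variable {V : Type*} [NormedAddCommGroup V] [InnerProductSpace ℝ V] [FiniteDimensional ℝ V]
  [MeasurableSpace V] [BorelSpace V]

theorem integrable_weightedDeriv_shortTimeFourier_smul (f h k : 𝓢(V, ℂ)) (p n : ℕ) :
    Integrable fun z : V × V =>
      weightedDeriv ℂ p n (shortTimeFourier f h z • timeFrequencyShift (z.1, -z.2) k) := by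
  have : (volume : Measure (V × V)).HasTemperateGrowth :=
    inferInstanceAs ((volume : Measure V).prod volume).HasTemperateGrowth
  obtain ⟨N, C₁, hC₁⟩ := exists_seminorm_timeFrequencyShift_le
    ((schwartz_withSeminorms ℂ V ℂ).continuous_seminorm (p, n)) k
  obtain ⟨C₂, hC₂⟩ := exists_one_add_norm_pow_mul_norm_shortTimeFourier_le f h
    ((volume : Measure (V × V)).integrablePower + N)
  have hshift : Continuous fun z : V × V => timeFrequencyShift (z.1, -z.2) k :=
    (continuous_timeFrequencyShift k).comp (continuous_fst.prodMk continuous_snd.neg)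
  have hcont := (weightedDeriv ℂ p n).continuous.comp
    ((continuous_shortTimeFourier f h).smul hshift)
  have hC₁_nonneg : 0 ≤ C₁ := by simpa using (apply_nonneg _ _).trans (hC₁ 0)
  refine integrable_of_one_add_norm_pow_mul_norm_le hcont.aestronglyMeasurable
    (C := C₂ * C₁) fun z => ?_
  have hneg : ‖(z.1, -z.2)‖ = ‖z‖ := by rw [Prod.norm_mk, norm_neg, Prod.norm_def]
  set P := (volume : Measure (V × V)).integrablePower
  calc (1 + ‖z‖) ^ P *
        ‖weightedDeriv ℂ p n (shortTimeFourier f h z • timeFrequencyShift (z.1, -z.2) k)‖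
      = (1 + ‖z‖) ^ P * (‖shortTimeFourier f h z‖ *
          SchwartzMap.seminorm ℂ p n (timeFrequencyShift (z.1, -z.2) k)) := by
        rw [norm_weightedDeriv, map_smul_eq_mul]
    _ ≤ (1 + ‖z‖) ^ P * (‖shortTimeFourier f h z‖ * ((1 + ‖z‖) ^ N * C₁)) := by
        gcongr
        exact hneg ▸ hC₁ (z.1, -z.2)
    _ = (1 + ‖z‖) ^ (P + N) * ‖shortTimeFourier f h z‖ * C₁ := by ring
    _ ≤ C₂ * C₁ := by
        gcongr
        exact hC₂ z

theorem shortTimeFourier_eq_fourierInv (f h : 𝓢(V, ℂ)) (x ξ : V) :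
    shortTimeFourier f h (x, ξ) =
      (𝓕⁻ (pairing (ContinuousLinearMap.mul ℂ ℂ) (f.compSubConstCLM ℂ (-x)) h) : 𝓢(V, ℂ))
        ((2 * Real.pi)⁻¹ • ξ) := by
  rw [shortTimeFourier, ← integral_add_right_eq_self _ x, fourierInv_coe, Real.fourierInv_eq']
  congr 1 with y
  rw [timeFrequencyShift_apply, add_sub_cancel_right, real_inner_smul_right,
    mul_inv_cancel_left₀ (by positivity), pairing_apply_apply, ContinuousLinearMap.mul_apply',
    compSubConstCLM_apply, sub_neg_eq_add, smul_eq_mul, smul_eq_mul, mul_comm Complex.I,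
    mul_left_comm]

theorem integral_exp_mul_fourierInv_smul (ψ : 𝓢(V, ℂ)) (t : V) :
    ∫ ξ, Complex.exp (Complex.I * (⟪t, -ξ⟫ : ℝ)) * (𝓕⁻ ψ : 𝓢(V, ℂ)) ((2 * Real.pi)⁻¹ • ξ) =
      (2 * Real.pi) ^ Module.finrank ℝ V * ψ t := by
  have hscale := Measure.integral_comp_smul volume (fun η : V =>
    Complex.exp ((-2 * Real.pi * ⟪η, t⟫ : ℝ) * Complex.I) • (𝓕⁻ ψ : 𝓢(V, ℂ)) η) (2 * Real.pi)⁻¹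
  rw [← Real.fourier_eq', ← fourier_coe, FourierTransform.fourier_fourierInv_eq] at hscale
  have hphase (ξ : V) : -2 * Real.pi * ⟪(2 * Real.pi)⁻¹ • ξ, t⟫ = ⟪t, -ξ⟫ := by
    rw [real_inner_smul_left, inner_neg_right, real_inner_comm, neg_mul, neg_mul,
      mul_inv_cancel_left₀ (by positivity)]
  simp only [hphase, smul_eq_mul, mul_comm _ Complex.I] at hscale
  rw [hscale, inv_pow, inv_inv, abs_of_pos (by positivity), Complex.real_smul]
  push_cast
  rfl

theorem integral_shortTimeFourier_mul_timeFrequencyShift (f h k : 𝓢(V, ℂ)) (x y : V) :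
    ∫ ξ, shortTimeFourier f h (x, ξ) * timeFrequencyShift (x, -ξ) k y =
      (2 * Real.pi) ^ Module.finrank ℝ V * f y * (h (y - x) * k (y - x)) := by
  let ψ := pairing (ContinuousLinearMap.mul ℂ ℂ) (f.compSubConstCLM ℂ (-x)) h
  calc ∫ ξ, shortTimeFourier f h (x, ξ) * timeFrequencyShift (x, -ξ) k y
      = ∫ ξ, Complex.exp (Complex.I * (⟪y - x, -ξ⟫ : ℝ)) *
          (𝓕⁻ ψ : 𝓢(V, ℂ)) ((2 * Real.pi)⁻¹ • ξ) * k (y - x) := by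
        congr 1 with ξ
        rw [timeFrequencyShift_apply, shortTimeFourier_eq_fourierInv, smul_eq_mul]
        ring
    _ = (2 * Real.pi) ^ Module.finrank ℝ V * ψ (y - x) * k (y - x) := by
        rw [integral_mul_const, integral_exp_mul_fourierInv_smul]
    _ = _ := by
        rw [pairing_apply_apply, ContinuousLinearMap.mul_apply', compSubConstCLM_apply,
          sub_neg_eq_add, sub_add_cancel]
        ring

theorem integral_shortTimeFourier_smul_timeFrequencyShift_apply (f h k : 𝓢(V, ℂ)) (y : V) :
    ∫ z : V × V, (shortTimeFourier f h z • timeFrequencyShift (z.1, -z.2) k) y =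
      (2 * Real.pi) ^ Module.finrank ℝ V * (∫ x, h x * k x) * f y := by
  have hint := integrable_apply_of_weightedDeriv
    (integrable_weightedDeriv_shortTimeFourier_smul f h k 0 0) y
  rw [Measure.volume_eq_prod] at hint ⊢
  rw [integral_prod _ hint]
  simp only [smul_apply, smul_eq_mul, integral_shortTimeFourier_mul_timeFrequencyShift]
  rw [integral_const_mul, integral_sub_left_eq_self (fun x => h x * k x) volume y]
  ring

theorem integral_shortTimeFourier_mul_tempered (f h k : 𝓢(V, ℂ)) (u : 𝓢(V, ℂ) →L[ℂ] ℂ) :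
    ∫ z : V × V, shortTimeFourier f h z * u (timeFrequencyShift (z.1, -z.2) k) =
      (2 * Real.pi) ^ Module.finrank ℝ V * (∫ x, h x * k x) * u f := by
  have hweak := integral_tempered_apply (integrable_weightedDeriv_shortTimeFourier_smul f h k)
    (f := ((2 * Real.pi) ^ Module.finrank ℝ V * ∫ x, h x * k x : ℂ) • f)
    (integral_shortTimeFourier_smul_timeFrequencyShift_apply f h k) u
  simpa only [map_smul, smul_eq_mul] using hweak

end Inversion

section FBI

theorem rpow_neg_div_two_mul_self_mul_pow {a : ℝ} (ha : 0 < a) (n : ℕ) :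
    a ^ (-(n : ℝ) / 2) * a ^ (-(n : ℝ) / 2) * a ^ n = 1 := by
  rw [← Real.rpow_add ha, add_halves, Real.rpow_neg ha.le, Real.rpow_natCast,
    inv_mul_cancel₀ (pow_ne_zero n ha.ne')]

theorem integral_norm_sq_pos {E F : Type*} [NormedAddCommGroup E] [NormedSpace ℝ E]
    [MeasurableSpace E] [BorelSpace E] [SecondCountableTopology E] [NormedAddCommGroup F]
    [NormedSpace ℝ F] {μ : Measure E} [μ.HasTemperateGrowth] [μ.IsOpenPosMeasure] {g : 𝓢(E, F)}
    (hg : g ≠ 0) : 0 < ∫ y, ‖g y‖ ^ 2 ∂μ := by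
  obtain ⟨y, hy⟩ := DFunLike.ne_iff.1 hg
  exact integral_pos_of_integrable_nonneg_nonzero (g.continuous.norm.pow 2)
    ((g.memLp 2 μ).integrable_norm_pow two_ne_zero) (fun y => sq_nonneg ‖g y‖)
    (pow_ne_zero 2 (norm_ne_zero_iff.2 hy))

variable {V : Type*} [NormedAddCommGroup V] [InnerProductSpace ℝ V] [FiniteDimensional ℝ V]
  [MeasurableSpace V] [BorelSpace V]

theorem conj_ofReal_mul_integral_mul_conj {f fc : 𝓢(V, ℂ)}
    (hfc : ∀ y, fc y = starRingEnd ℂ (f y)) (h : 𝓢(V, ℂ)) (c : ℝ) (z : V × V) :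
    starRingEnd ℂ (c * ∫ y, f y * starRingEnd ℂ
      (Complex.exp (Complex.I * (⟪y - z.1, z.2⟫ : ℝ)) * h (y - z.1))) =
        c * shortTimeFourier fc h z := by
  rw [map_mul, Complex.conj_ofReal, ← integral_conj, shortTimeFourier]
  congr 2 with y
  rw [map_mul, Complex.conj_conj, hfc, timeFrequencyShift_apply, smul_eq_mul]

theorem integral_normalized_mul_shortTimeFourier (f h k : 𝓢(V, ℂ)) (u : 𝓢(V, ℂ) →L[ℂ] ℂ) :
    ∫ z : V × V,
      (((2 * Real.pi) ^ (-(Module.finrank ℝ V : ℝ) / 2) : ℝ) *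
        u (timeFrequencyShift (z.1, -z.2) k)) *
      (((2 * Real.pi) ^ (-(Module.finrank ℝ V : ℝ) / 2) : ℝ) * shortTimeFourier f h z) =
        (∫ y, h y * k y) * u f := by
  have hnorm := congrArg Complex.ofReal
    (rpow_neg_div_two_mul_self_mul_pow Real.two_pi_pos (Module.finrank ℝ V))
  set c : ℝ := (2 * Real.pi) ^ (-(Module.finrank ℝ V : ℝ) / 2)
  push_cast at hnorm
  calc _ = ∫ z : V × V, c * c *
        (shortTimeFourier f h z * u (timeFrequencyShift (z.1, -z.2) k)) := by
        congr 1 with z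
        ring
    _ = c * c * (2 * Real.pi) ^ Module.finrank ℝ V * ((∫ y, h y * k y) * u f) := by
        rw [integral_const_mul, integral_shortTimeFourier_mul_tempered]
        ring
    _ = _ := by rw [hnorm, one_mul]

theorem fbi_inversion_general (g h : 𝓢(V, ℂ)) (u : 𝓢(V, ℂ) →L[ℂ] ℂ) (φ : V → V → 𝓢(V, ℂ))
    (hφ : ∀ x ξ y, φ x ξ y =
      starRingEnd ℂ (Complex.exp (Complex.I * (⟪y - x, ξ⟫ : ℝ)) * g (y - x))) :
    (∀ f fc : 𝓢(V, ℂ), (∀ y, fc y = starRingEnd ℂ (f y)) →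
      (∫ z : V × V,
          ((((2 * Real.pi) ^ (-(Module.finrank ℝ V : ℝ) / 2) : ℝ) : ℂ) * u (φ z.1 z.2)) *
            starRingEnd ℂ ((((2 * Real.pi) ^ (-(Module.finrank ℝ V : ℝ) / 2) : ℝ) : ℂ) *
              ∫ y, f y * starRingEnd ℂ
                (Complex.exp (Complex.I * (⟪y - z.1, z.2⟫ : ℝ)) * h (y - z.1)))) =
        (∫ y, h y * starRingEnd ℂ (g y)) * u fc) ∧
    (g ≠ 0 → ∀ f fc : 𝓢(V, ℂ), (∀ y, fc y = starRingEnd ℂ (f y)) →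
      ((∫ y, ‖g y‖ ^ 2 : ℝ))⁻¹ •
        (∫ z : V × V,
          ((((2 * Real.pi) ^ (-(Module.finrank ℝ V : ℝ) / 2) : ℝ) : ℂ) * u (φ z.1 z.2)) *
            starRingEnd ℂ ((((2 * Real.pi) ^ (-(Module.finrank ℝ V : ℝ) / 2) : ℝ) : ℂ) *
              ∫ y, f y * starRingEnd ℂ
                (Complex.exp (Complex.I * (⟪y - z.1, z.2⟫ : ℝ)) * g (y - z.1)))) =
        u fc) := by
  obtain ⟨k, hk⟩ : ∃ k : 𝓢(V, ℂ), ∀ y, k y = starRingEnd ℂ (g y) :=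
    ⟨φ 0 0, fun y => by simp [hφ]⟩
  have window_eq_shift (x ξ : V) : φ x ξ = timeFrequencyShift (x, -ξ) k := by
    ext y
    rw [hφ, timeFrequencyShift_apply, hk, map_mul, ← Complex.exp_conj, map_mul,
      Complex.conj_I, Complex.conj_ofReal, inner_neg_right, Complex.ofReal_neg, neg_mul_comm,
      smul_eq_mul]
  refine ⟨fun f fc hfc => ?_, fun hg f fc hfc => ?_⟩ <;>
    simp only [window_eq_shift, conj_ofReal_mul_integral_mul_conj hfc]
  · simpa only [hk] using integral_normalized_mul_shortTimeFourier fc h k u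
  · have integral_norm_sq : ∫ y, g y * k y = (∫ y, ‖g y‖ ^ 2 : ℝ) := by
      simp only [hk, Complex.mul_conj', ← integral_complex_ofReal, Complex.ofReal_pow]
    rw [integral_normalized_mul_shortTimeFourier, integral_norm_sq, ← Complex.real_smul,
      inv_smul_smul₀ (integral_norm_sq_pos hg).ne']

end FBI

end

open RealInnerProductSpace MeasureTheory in
/-- Inversion formula for the FBI-type transform `𝒯_g u(x,ξ) = (2π)^{-d/2}(u, T_x M_ξ g)`:
for `g, h ∈ 𝒮(ℝ^d)` and `u ∈ 𝒮'(ℝ^d)` one has `𝒯_h^* 𝒯_g u = (h,g)_{L²} u`, and in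
particular, if `g ≠ 0`, then `‖g‖_{L²}^{-2} 𝒯_g^* 𝒯_g u = u`. The identities are stated
weakly: both sides are paired sesquilinearly with an arbitrary test function `f`, the
pairing `(u, f)` being realized as `u` applied to the conjugate `fc` of `f`, the pairing
defining the adjoint being `(𝒯_h^* U, f) = (U, 𝒯_h f)`, and the sesquilinear pairing of the
window `(u, T_x M_ξ g)` realized by the conjugated window `φ x ξ : y ↦ conj((T_x M_ξ g)(y))`. -/
theorem fbi_inversion (d : ℕ)
    (g h : SchwartzMap (EuclideanSpace ℝ (Fin d)) ℂ)
    (u : SchwartzMap (EuclideanSpace ℝ (Fin d)) ℂ →L[ℂ] ℂ)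
    (φ : EuclideanSpace ℝ (Fin d) → EuclideanSpace ℝ (Fin d) →
      SchwartzMap (EuclideanSpace ℝ (Fin d)) ℂ)
    (hφ : ∀ x ξ y, φ x ξ y =
      starRingEnd ℂ (Complex.exp (Complex.I * (⟪y - x, ξ⟫ : ℝ)) * g (y - x))) :
    (∀ f fc : SchwartzMap (EuclideanSpace ℝ (Fin d)) ℂ,
      (∀ y, fc y = starRingEnd ℂ (f y)) →
      (∫ z : EuclideanSpace ℝ (Fin d) × EuclideanSpace ℝ (Fin d),
          ((((2 * Real.pi) ^ (-(d : ℝ) / 2) : ℝ) : ℂ) * u (φ z.1 z.2)) *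
            starRingEnd ℂ ((((2 * Real.pi) ^ (-(d : ℝ) / 2) : ℝ) : ℂ) *
              ∫ y, f y * starRingEnd ℂ
                (Complex.exp (Complex.I * (⟪y - z.1, z.2⟫ : ℝ)) * h (y - z.1)))) =
        (∫ y, h y * starRingEnd ℂ (g y)) * u fc) ∧
    (g ≠ 0 → h = g →
      ∀ f fc : SchwartzMap (EuclideanSpace ℝ (Fin d)) ℂ,
      (∀ y, fc y = starRingEnd ℂ (f y)) →
      ((∫ y, ‖g y‖ ^ 2 : ℝ))⁻¹ •
        (∫ z : EuclideanSpace ℝ (Fin d) × EuclideanSpace ℝ (Fin d),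
          ((((2 * Real.pi) ^ (-(d : ℝ) / 2) : ℝ) : ℂ) * u (φ z.1 z.2)) *
            starRingEnd ℂ ((((2 * Real.pi) ^ (-(d : ℝ) / 2) : ℝ) : ℂ) *
              ∫ y, f y * starRingEnd ℂ
                (Complex.exp (Complex.I * (⟪y - z.1, z.2⟫ : ℝ)) * g (y - z.1)))) =
        u fc) := by
  have general := fbi_inversion_general g h u φ hφ
  simp only [finrank_euclideanSpace_fin] at general
  exact general.imp_right fun inversion hg _ => inversion hg
end
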